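/- arXiv:2604.21703 — 10 statements merged into one kernel-verified Lean document; each statement's English description precedes it below -/
import Mathlib

section
/- Let F be a finite field of odd cardinality q, V a finite-dimensional F-vector space, Q a nondegenerate symmetric bilinear form on V, and ψ : F → ℂ a nontrivial additive character. Then the Weil index γ_ψ(V,Q) = q^{-dim V/2} ∑_{x ∈ V} ψ(Q(x,x)/2) is a fourth root of unity, i.e. γ_ψ(V,Q)^4 = 1. -/
lemma weil_sum_char_zero {F V : Type*} [Field F] [AddCommGroup V] [Module F V] [Fintype V]
    (Q : LinearMap.BilinForm F V) (ψ : AddChar F ℂ) (hψ : ψ ≠ 1) (u : V)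
    (hu : ∃ y, Q u y ≠ 0) : ∑ y : V, ψ (Q u y) = 0 := by
  obtain ⟨y, hy⟩ := hu
  obtain ⟨c, hc⟩ : ∃ c, ψ c ≠ 1 := by
    by_contra! h
    exact hψ (by ext c; simpa using h c)
  set z : V := (c / Q u y) • y with hz
  have hQ : Q u z = c := by simp [hz, hy]
  have h : ∑ y : V, ψ (Q u y) = ψ c * ∑ y : V, ψ (Q u y) := by
    rw [Finset.mul_sum, ← Equiv.sum_comp (Equiv.addLeft z)]
    refine Finset.sum_congr rfl fun x _ => ?_
    rw [← AddChar.map_add_eq_mul]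
    simp [hQ]
  have h2 : (ψ c - 1) * ∑ y : V, ψ (Q u y) = 0 := by linear_combination -h
  exact (mul_eq_zero.mp h2).resolve_left (sub_ne_zero.mpr hc)

lemma weil_sum_mul_conj {F V : Type*} [Field F] [AddCommGroup V] [Module F V] [Fintype V]
    (h2 : (2 : F) ≠ 0) (Q : LinearMap.BilinForm F V)
    (hsymm : ∀ x y : V, Q x y = Q y x) (hnd : ∀ u, (∀ y, Q u y = 0) → u = 0)
    (ψ : AddChar F ℂ) (hψ : ψ ≠ 1) :
    (∑ x : V, ψ (Q x x / 2)) * (∑ x : V, ψ (-(Q x x / 2))) = Fintype.card V := by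
  classical
  have key : ∀ y u : V, ψ (Q (u + y) (u + y) / 2) * ψ (-(Q y y / 2))
      = ψ (Q u u / 2) * ψ (Q u y) := by
    intro y u
    rw [← AddChar.map_add_eq_mul, ← AddChar.map_add_eq_mul]
    congr 1
    simp only [map_add, LinearMap.add_apply, hsymm y u]
    field_simp
    ring
  calc _ = ∑ y : V, ∑ x : V, ψ (Q x x / 2) * ψ (-(Q y y / 2)) := by
        rw [Finset.sum_mul_sum, Finset.sum_comm]
    _ = ∑ y : V, ∑ u : V, ψ (Q u u / 2) * ψ (Q u y) := by
        refine Finset.sum_congr rfl fun y _ => ?_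
        rw [← Equiv.sum_comp (Equiv.addRight y)]
        exact Finset.sum_congr rfl fun u _ => key y u
    _ = ∑ u : V, ψ (Q u u / 2) * ∑ y : V, ψ (Q u y) := by
        rw [Finset.sum_comm]
        simp only [Finset.mul_sum]
    _ = ψ (Q 0 0 / 2) * ∑ y : V, ψ (Q 0 y) := by
        refine Finset.sum_eq_single 0 (fun u _ hu => ?_) (by simp)
        rw [weil_sum_char_zero Q ψ hψ u, mul_zero]
        by_contra! h
        exact hu (hnd u h)
    _ = _ := by simp

lemma weil_sum_sq {F V : Type*} [Field F] [AddCommGroup V] [Module F V] [Fintype V]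
    (Q : LinearMap.BilinForm F V) (hsymm : ∀ x y : V, Q x y = Q y x)
    (ψ : AddChar F ℂ) (a b : F) (hab : a ^ 2 + b ^ 2 = -1) :
    (∑ x : V, ψ (Q x x / 2)) ^ 2 = (∑ x : V, ψ (-(Q x x / 2))) ^ 2 := by
  let f : V × V → V × V := fun p => (a • p.1 + b • p.2, -b • p.1 + a • p.2)
  have hf : Function.Injective f := by
    rintro ⟨x, y⟩ ⟨x', y'⟩ h
    simp only [f, Prod.mk.injEq] at h
    obtain ⟨h1, h3⟩ := h
    have e1 : ∀ s t : V, a • (a • s + b • t) - b • (-b • s + a • t) = -s := by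
      intro s t
      have : a • (a • s + b • t) - b • (-b • s + a • t) = (a ^ 2 + b ^ 2) • s := by module
      rw [this, hab]; simp
    have e2 : ∀ s t : V, b • (a • s + b • t) + a • (-b • s + a • t) = -t := by
      intro s t
      have : b • (a • s + b • t) + a • (-b • s + a • t) = (a ^ 2 + b ^ 2) • t := by module
      rw [this, hab]; simp
    have k1 := e1 x y
    have k2 := e2 x y
    rw [h1, h3, e1] at k1
    rw [h1, h3, e2] at k2
    rw [neg_inj.mp k1, neg_inj.mp k2]
  have hb : Function.Bijective f := Finite.injective_iff_bijective.mp hf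
  rw [sq, sq, Finset.sum_mul_sum, Finset.sum_mul_sum, ← Fintype.sum_prod_type',
    ← Fintype.sum_prod_type', ← hb.sum_comp]
  refine Finset.sum_congr rfl fun p _ => ?_
  rw [← AddChar.map_add_eq_mul, ← AddChar.map_add_eq_mul]
  congr 1
  simp only [f, map_add, map_smul, LinearMap.add_apply, LinearMap.smul_apply, smul_eq_mul,
    hsymm p.2 p.1]
  linear_combination (Q p.1 p.1 / 2 + Q p.2 p.2 / 2) * hab

open Finset

/-- The Weil index `γ_ψ(V,Q) = q^{-dim V/2} ∑_{x ∈ V} ψ(Q(x,x)/2)`. -/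
noncomputable def weilIndex {F V : Type*} [Field F] [Fintype F]
    [AddCommGroup V] [Module F V] [Fintype V]
    (ψ : AddChar F ℂ) (Q : LinearMap.BilinForm F V) : ℂ :=
  ((Real.sqrt (Fintype.card F) : ℂ))⁻¹ ^ Module.finrank F V * ∑ x : V, ψ (Q x x / 2)

/-- The Weil index is a fourth root of unity. -/
theorem weilIndex_pow_four {F V : Type*} [Field F] [Fintype F]
    [AddCommGroup V] [Module F V] [Fintype V]
    (hq : Odd (Fintype.card F))
    (Q : LinearMap.BilinForm F V)
    (hsymm : ∀ x y : V, Q x y = Q y x)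
    (hnd : LinearMap.BilinForm.Nondegenerate Q)
    (ψ : AddChar F ℂ) (hψ : ψ ≠ 1) :
    weilIndex ψ Q ^ 4 = 1 := by
  have hchar : ringChar F ≠ 2 := fun h => by
    have := FiniteField.even_card_iff_char_two.mp h
    rw [Nat.odd_iff] at hq
    omega
  have h2 : (2 : F) ≠ 0 := Ring.two_ne_zero hchar
  obtain ⟨a, b, hab⟩ : ∃ a b : F, a ^ 2 + b ^ 2 = -1 := by
    haveI : NeZero (ringChar F) := ⟨CharP.ringChar_ne_zero_of_finite F⟩
    obtain ⟨a, b, h⟩ := CharP.sq_add_sq F (ringChar F) (-1)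
    exact ⟨a, b, by simpa using h⟩
  have hc := weil_sum_mul_conj h2 Q hsymm (fun u h => hnd.1 u h) ψ hψ
  have hs := weil_sum_sq Q hsymm ψ a b hab
  rw [Module.card_eq_pow_finrank (K := F)] at hc
  have hq0 : (Fintype.card F : ℂ) ≠ 0 := by simp
  have hr : ((Real.sqrt (Fintype.card F) : ℂ)) ^ 2 = Fintype.card F := by
    rw [← Complex.ofReal_pow, Real.sq_sqrt (by positivity)]; simp
  unfold weilIndex
  set S := ∑ x : V, ψ (Q x x / 2)
  set T := ∑ x : V, ψ (-(Q x x / 2))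
  have h4 : S ^ 4 = ((Fintype.card F : ℂ) ^ Module.finrank F V) ^ 2 := by
    push_cast at hc
    rw [← hc]
    linear_combination S ^ 2 * hs
  rw [mul_pow, h4, ← hr]
  have hr0 : ((Real.sqrt (Fintype.card F) : ℂ)) ≠ 0 := by
    intro h; rw [h] at hr; exact hq0 (by rw [← hr]; simp)
  rw [inv_pow]
  field_simp
  ring
end

section
/- Let F be a finite field of odd cardinality q with algebraic closure K, and ψ : F → ℂ a nontrivial additive character. For a symmetric invertible matrix N ∈ M_n(F) set γ_ψ(N) = q^{-n/2} ∑_{v ∈ F^n} ψ((vᵗ N v)/2). Let M, M' ∈ M_n(F) be symmetric invertible matrices, A ∈ GL_n(K), and s ∈ M_n(F) such that: (i) the entrywise Frobenius Fr(A) (raising each entry to the q-th power) satisfies Fr(A) = A · s (with s viewed in M_n(K)); (ii) sᵗ M s = M; (iii) Aᵗ M A = M' (with M, M' viewed in M_n(K)). Then det(s) = ±1 in F, and γ_ψ(M') = γ_ψ(M) if det(s) = 1, while γ_ψ(M') = −γ_ψ(M) if det(s) = −1. -/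
open Finset Matrix

/-- The Weil index of a symmetric invertible matrix `N` over a finite field:
`γ_ψ(N) = q^{-n/2} ∑_{v ∈ F^n} ψ((vᵗ N v)/2)`. -/
noncomputable def weilIndexMat {F : Type*} [Field F] [Fintype F] {n : ℕ}
    (ψ : AddChar F ℂ) (N : Matrix (Fin n) (Fin n) F) : ℂ :=
  ((Real.sqrt (Fintype.card F) : ℂ))⁻¹ ^ n * ∑ v : Fin n → F, ψ (v ⬝ᵥ (N *ᵥ v) / 2)

section aux
variable {F : Type*} [Field F] [Fintype F] [DecidableEq F]

lemma aux_sum_sq (hF : ringChar F ≠ 2) (ψ : AddChar F ℂ) (hψ : ψ ≠ 1) (a : F) (ha : a ≠ 0) :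
    ∑ x : F, ψ (a * x ^ 2) = gaussSum ((quadraticChar F).ringHomComp (Int.castRingHom ℂ))
      (ψ.mulShift a) := by
  have h0 : ∑ y : F, ψ (a * y) = 0 := by
    have h := AddChar.sum_eq_zero_of_ne_one hψ
    rw [← h]
    exact Fintype.sum_equiv (Equiv.mulLeft₀ a ha) _ _ (fun _ => rfl)
  have h1 : ∑ x : F, ψ (a * x ^ 2) = ∑ y : F, ((quadraticChar F y : ℂ) + 1) * ψ (a * y) := by
    rw [← Finset.sum_fiberwise_of_maps_to (s := univ) (t := univ) (g := fun x : F => x ^ 2)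
      (fun _ _ => mem_univ _)]
    refine Finset.sum_congr rfl fun y _ => ?_
    have h2 := quadraticChar_card_sqrts hF y
    have h3 : ∑ i with i ^ 2 = y, ψ (a * i ^ 2) = ∑ i : F with i ^ 2 = y, ψ (a * y) := by
      refine Finset.sum_congr rfl fun i hi => ?_
      rw [(Finset.mem_filter.1 hi).2]
    rw [h3, Finset.sum_const, nsmul_eq_mul]
    congr 1
    have h4 : ({x : F | x ^ 2 = y} : Set F).toFinset = ({i : F | i ^ 2 = y} : Finset F) := by
      ext; simp
    rw [h4] at h2
    exact_mod_cast congrArg (Int.cast (R := ℂ)) h2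
  rw [h1]
  simp only [add_mul, one_mul, Finset.sum_add_distrib, h0, add_zero]
  rfl

lemma aux_sum_sq' (hF : ringChar F ≠ 2) (ψ : AddChar F ℂ) (hψ : ψ ≠ 1) (a : F) (ha : a ≠ 0) :
    ∑ x : F, ψ (x * (a * x) / 2) = (quadraticChar F a : ℂ) * ∑ x : F, ψ (x ^ 2 / 2) := by
  have h2 : (2 : F) ≠ 0 := Ring.two_ne_zero hF
  have e1 : ∑ x : F, ψ (x * (a * x) / 2) = ∑ x : F, ψ ((a / 2) * x ^ 2) :=
    Finset.sum_congr rfl fun x _ => by congr 1; ring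
  have e2 : ∑ x : F, ψ (x ^ 2 / 2) = ∑ x : F, ψ ((1 / 2) * x ^ 2) :=
    Finset.sum_congr rfl fun x _ => by congr 1; ring
  rw [e1, e2, aux_sum_sq hF ψ hψ _ (div_ne_zero ha h2),
    aux_sum_sq hF ψ hψ _ (div_ne_zero one_ne_zero h2)]
  have h := gaussSum_mulShift ((quadraticChar F).ringHomComp (Int.castRingHom ℂ))
    (ψ.mulShift (1 / 2)) (Units.mk0 a ha)
  have e3 : (ψ.mulShift (1 / 2)).mulShift (Units.mk0 a ha : Fˣ) = ψ.mulShift (a / 2) := by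
    ext x
    simp only [AddChar.mulShift_apply, Units.val_mk0]
    congr 1; ring
  rw [e3] at h
  rw [← h, ← mul_assoc]
  have h5 : (quadraticChar F a : ℂ) * (quadraticChar F a : ℂ) = 1 := by
    have := quadraticChar_sq_one ha
    rw [← sq]; exact_mod_cast this
  have h6 : ((quadraticChar F).ringHomComp (Int.castRingHom ℂ)) (Units.mk0 a ha : Fˣ)
    = (quadraticChar F a : ℂ) := rfl
  rw [h6, h5, one_mul]

lemma aux_diag (hF : ringChar F ≠ 2) {n : ℕ} (N : Matrix (Fin n) (Fin n) F) (hN : N.IsSymm) :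
    ∃ (P : Matrix (Fin n) (Fin n) F) (d : Fin n → F), IsUnit P ∧ Pᵀ * N * P = diagonal d := by
  haveI : Invertible (2 : F) := invertibleOfNonzero (Ring.two_ne_zero hF)
  have hB : LinearMap.IsSymm (Matrix.toBilin' N) := by
    constructor
    intro x y
    simp only [Matrix.toBilin'_apply', RingHom.id_apply]
    rw [dotProduct_comm, ← vecMul_transpose, hN.eq, dotProduct_mulVec]
  obtain ⟨v, hv⟩ := LinearMap.BilinForm.exists_orthogonal_basis hB
  let b := v.reindex (finCongr (Module.finrank_fin_fun F (n := n)))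
  have h := LinearMap.BilinForm.toMatrix_mul_basis_toMatrix (Pi.basisFun F (Fin n)) b
    (Matrix.toBilin' N)
  refine ⟨(Pi.basisFun F (Fin n)).toMatrix b, fun i => Matrix.toBilin' N (b i) (b i), ?_, ?_⟩
  · haveI := (Pi.basisFun F (Fin n)).invertibleToMatrix b
    exact isUnit_of_invertible _
  · rw [LinearMap.BilinForm.toMatrix_basisFun, LinearMap.BilinForm.toMatrix'_toBilin'] at h
    rw [h]
    ext i j
    rw [LinearMap.BilinForm.toMatrix_apply]
    by_cases hij : i = j
    · subst hij; simp
    · rw [diagonal_apply_ne _ hij]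
      simp only [b, Module.Basis.reindex_apply]
      exact hv (by simpa using hij)

lemma aux_weil (hF : ringChar F ≠ 2) (ψ : AddChar F ℂ) (hψ : ψ ≠ 1) {n : ℕ}
    (N : Matrix (Fin n) (Fin n) F) (hN : N.IsSymm) (hu : IsUnit N) :
    ∑ v : Fin n → F, ψ (v ⬝ᵥ (N *ᵥ v) / 2)
      = (quadraticChar F N.det : ℂ) * (∑ x : F, ψ (x ^ 2 / 2)) ^ n := by
  obtain ⟨P, d, hP, hd⟩ := aux_diag hF N hN
  have hPd : P.det ≠ 0 := ((Matrix.isUnit_iff_isUnit_det _).1 hP).ne_zero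
  have hNd : N.det ≠ 0 := ((Matrix.isUnit_iff_isUnit_det _).1 hu).ne_zero
  have hdet := congrArg Matrix.det hd
  rw [det_mul, det_mul, det_transpose, det_diagonal] at hdet
  have hdi : ∀ i, d i ≠ 0 := by
    have : ∏ i, d i ≠ 0 := by
      rw [← hdet]; exact mul_ne_zero (mul_ne_zero hPd hNd) hPd
    exact fun i => (Finset.prod_ne_zero_iff.1 this) i (mem_univ _)
  have hbij : Function.Bijective (fun v : Fin n → F => P *ᵥ v) := by
    have : Function.Injective P.mulVec := Matrix.mulVec_injective_iff_isUnit.2 hP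
    exact Finite.injective_iff_bijective.1 this
  rw [← hbij.sum_comp (fun v : Fin n → F => ψ (v ⬝ᵥ (N *ᵥ v) / 2))]
  have e1 : ∀ v : Fin n → F, ψ ((P *ᵥ v) ⬝ᵥ (N *ᵥ (P *ᵥ v)) / 2)
      = ∏ i, ψ (v i * (d i * v i) / 2) := by
    intro v
    have : (P *ᵥ v) ⬝ᵥ (N *ᵥ (P *ᵥ v)) = v ⬝ᵥ (diagonal d *ᵥ v) := by
      rw [← hd, ← mulVec_mulVec, ← mulVec_mulVec, dotProduct_mulVec v Pᵀ, vecMul_transpose]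
    rw [this]
    simp only [dotProduct, mulVec_diagonal, Finset.sum_div]
    exact map_prod ψ.toMonoidHom (fun i => Multiplicative.ofAdd (v i * (d i * v i) / 2)) univ
  simp only [e1]
  rw [← Fintype.piFinset_univ, ← Finset.prod_univ_sum (fun _ => univ)
    (fun i x => ψ (x * (d i * x) / 2))]
  simp only [aux_sum_sq' hF ψ hψ _ (hdi _)]
  rw [Finset.prod_mul_distrib, Finset.prod_const, card_univ, Fintype.card_fin]
  congr 1
  rw [← Int.cast_prod, ← map_prod, ← hdet, map_mul, map_mul]
  have := quadraticChar_sq_one hPd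
  congr 1
  linear_combination (quadraticChar F N.det) * this

end aux

/-- Galois twisting of a quadratic form by an orthogonal cocycle `s` changes the Weil index
by `det s = ±1`. -/
theorem weilIndex_galois_twist {F K : Type*} [Field F] [Fintype F] [DecidableEq F]
    [Field K] [Algebra F K] [IsAlgClosure F K]
    (hq : Odd (Fintype.card F))
    (ψ : AddChar F ℂ) (hψ : ψ ≠ 1)
    {n : ℕ} (M M' : Matrix (Fin n) (Fin n) F)
    (hM : M.IsSymm) (hMinv : IsUnit M)
    (hM' : M'.IsSymm) (hM'inv : IsUnit M')
    (A : Matrix (Fin n) (Fin n) K) (hA : IsUnit A)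
    (s : Matrix (Fin n) (Fin n) F)
    (hFr : A.map (fun x => x ^ Fintype.card F) = A * s.map (algebraMap F K))
    (hs : sᵀ * M * s = M)
    (hAM : Aᵀ * M.map (algebraMap F K) * A = M'.map (algebraMap F K)) :
    (s.det = 1 ∨ s.det = -1) ∧
      (s.det = 1 → weilIndexMat ψ M' = weilIndexMat ψ M) ∧
      (s.det = -1 → weilIndexMat ψ M' = - weilIndexMat ψ M) := by
  have hF : ringChar F ≠ 2 := by
    intro h
    have := FiniteField.even_card_of_char_two h
    rw [Nat.odd_iff] at hq
    omega
  have hMd : M.det ≠ 0 := ((Matrix.isUnit_iff_isUnit_det _).1 hMinv).ne_zero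
  have hM'd : M'.det ≠ 0 := ((Matrix.isUnit_iff_isUnit_det _).1 hM'inv).ne_zero
  have hAd : A.det ≠ 0 := ((Matrix.isUnit_iff_isUnit_det _).1 hA).ne_zero
  have h1 : s.det = 1 ∨ s.det = -1 := by
    have := congrArg Matrix.det hs
    rw [det_mul, det_mul, det_transpose] at this
    apply mul_self_eq_one_iff.1
    apply mul_right_cancel₀ hMd
    linear_combination this
  have h2 : (A.det) ^ Fintype.card F = A.det * algebraMap F K s.det := by
    have h := congrArg Matrix.det hFr
    have e : A.map (fun x => x ^ Fintype.card F)
        = (FiniteField.frobeniusAlgHom F K).toRingHom.mapMatrix A := by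
      ext i j; simp
    rw [e, ← RingHom.map_det, det_mul] at h
    rw [RingHom.map_det]
    simpa using h
  have h3 : A.det ^ 2 * algebraMap F K M.det = algebraMap F K M'.det := by
    have h := congrArg Matrix.det hAM
    rw [det_mul, det_mul, det_transpose] at h
    rw [RingHom.map_det, RingHom.map_det, RingHom.mapMatrix_apply, RingHom.mapMatrix_apply, ← h]
    ring
  have hr : M'.det / M.det ≠ 0 := div_ne_zero hM'd hMd
  have h4 : A.det ^ 2 = algebraMap F K (M'.det / M.det) := by
    rw [map_div₀, ← h3]
    field_simp [show algebraMap F K M.det ≠ 0 by simpa using hMd]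
  have h5 : s.det = (quadraticChar F (M'.det / M.det) : F) := by
    rw [quadraticChar_eq_pow_of_char_ne_two' hF]
    apply (algebraMap F K).injective
    rw [map_pow, ← h4, ← pow_mul]
    apply mul_left_cancel₀ hAd
    rw [← h2, ← pow_succ']
    congr 1
    rw [Nat.odd_iff] at hq
    omega
  have h6 : quadraticChar F M'.det = quadraticChar F (M'.det / M.det) * quadraticChar F M.det := by
    rw [← map_mul, div_mul_cancel₀ _ hMd]
  have h2' : (1 : F) ≠ -1 := (Ring.neg_one_ne_one_of_char_ne_two hF).symm
  refine ⟨h1, fun h => ?_, fun h => ?_⟩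
  · unfold weilIndexMat
    rw [aux_weil hF ψ hψ M hM hMinv, aux_weil hF ψ hψ M' hM' hM'inv, h6]
    rcases quadraticChar_dichotomy hr with hc | hc
    · rw [hc, one_mul]
    · rw [h, hc] at h5; simp at h5; exact absurd h5 h2'
  · unfold weilIndexMat
    rw [aux_weil hF ψ hψ M hM hMinv, aux_weil hF ψ hψ M' hM' hM'inv, h6]
    rcases quadraticChar_dichotomy hr with hc | hc
    · rw [h, hc] at h5; simp at h5; exact absurd h5.symm h2'
    · rw [hc]; push_cast; ring
end

section
/- Let F be a finite field of odd cardinality q, V a finite-dimensional F-vector space, Q a nondegenerate symmetric bilinear form on V, ψ : F → ℂ a nontrivial additive character, and a ∈ F a nonzero element. Then γ_ψ(V, aQ) = γ_ψ(V, Q) · χ(a)^{dim V}, where aQ is the bilinear form (x,y) ↦ a·Q(x,y) and χ is the quadratic character of F. -/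
open Finset

theorem wi_map_sum {F ι : Type*} [Field F] (ψ : AddChar F ℂ) (s : Finset ι) (f : ι → F) :
    ψ (∑ i ∈ s, f i) = ∏ i ∈ s, ψ (f i) := by
  classical
  induction s using Finset.induction_on with
  | empty => simp
  | insert i s hi ih => rw [Finset.sum_insert hi, Finset.prod_insert hi, AddChar.map_add_eq_mul, ih]

theorem wi_one_dim {F : Type*} [Field F] [Fintype F] [DecidableEq F]
    (hF : ringChar F ≠ 2) (ψ : AddChar F ℂ) (hψ : ψ ≠ 1) (c : F) (hc : c ≠ 0) :
    ∑ t : F, ψ (c * t ^ 2) =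
      ((quadraticChar F c : ℤ) : ℂ) * ∑ y : F, ((quadraticChar F y : ℤ) : ℂ) * ψ y := by
  have hprim : ψ.IsPrimitive := AddChar.IsPrimitive.of_ne_one hψ
  have h0 : ∑ y : F, ψ (c * y) = 0 := by
    have := AddChar.sum_mulShift c hprim
    rw [if_neg hc] at this
    simpa [mul_comm] using this
  have h1 : ∑ t : F, ψ (c * t ^ 2) =
      ∑ y : F, (((quadraticChar F y : ℤ) : ℂ) + 1) * ψ (c * y) := by
    rw [← Finset.sum_fiberwise (s := univ) (g := fun t : F => t ^ 2)]
    refine Finset.sum_congr rfl fun y _ => ?_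
    have hy := quadraticChar_card_sqrts hF y
    have hy' : (((#{x : F | x ^ 2 = y}.toFinset : ℤ)) : ℂ) = ((quadraticChar F y : ℤ) : ℂ) + 1 := by
      rw [hy]; push_cast; rfl
    rw [← hy', Finset.sum_congr rfl (g := fun _ => ψ (c * y))]
    · simp
    · intro t ht
      simp only [mem_filter] at ht
      rw [ht.2]
  have hcc : ((quadraticChar F c : ℤ) : ℂ) * ((quadraticChar F c : ℤ) : ℂ) = 1 := by
    have := quadraticChar_sq_one hc
    rw [← Int.cast_mul, ← sq, this]; simp
  rw [h1]
  simp_rw [add_mul, one_mul]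
  rw [Finset.sum_add_distrib, h0, add_zero,
    ← Equiv.sum_comp (Equiv.mulLeft₀ c hc) (fun y => ((quadraticChar F y : ℤ) : ℂ) * ψ y),
    Finset.mul_sum]
  refine Finset.sum_congr rfl fun y _ => ?_
  have hm : (Equiv.mulLeft₀ c hc) y = c * y := rfl
  simp only [hm, map_mul, Int.cast_mul]
  linear_combination (-((quadraticChar F y : ℤ) : ℂ) * ψ (c * y)) * hcc

theorem wi_sum {F V ι : Type*} [Field F] [Fintype F] [AddCommGroup V] [Module F V] [Fintype V]
    [Fintype ι] [DecidableEq ι] (ψ : AddChar F ℂ) (Q : LinearMap.BilinForm F V)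
    (v : Module.Basis ι F V) (hv : ∀ i j, i ≠ j → Q (v i) (v j) = 0) :
    ∑ x : V, ψ (Q x x / 2) = ∏ i, ∑ t : F, ψ (Q (v i) (v i) / 2 * t ^ 2) := by
  rw [Finset.prod_univ_sum, Fintype.piFinset_univ, ← v.equivFun.symm.toEquiv.sum_comp]
  refine Finset.sum_congr rfl fun x _ => ?_
  rw [← wi_map_sum]
  congr 1
  simp only [LinearEquiv.coe_toEquiv, Module.Basis.equivFun_symm_apply, map_sum, LinearMap.sum_apply,
    map_smul, LinearMap.smul_apply, smul_eq_mul, Finset.sum_div]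
  refine Finset.sum_congr rfl fun i _ => ?_
  rw [Finset.sum_eq_single i]
  · ring
  · intro j _ hj
    simp [hv _ _ hj, hv _ _ hj.symm]
  · simp

/-- Rescaling the bilinear form by `a ∈ F^×` changes the Weil index by `χ(a)^{dim V}`,
where `χ` is the quadratic character of `F`. -/
theorem weilIndex_smul {F V : Type*} [Field F] [Fintype F] [DecidableEq F]
    [AddCommGroup V] [Module F V] [Fintype V]
    (hq : Odd (Fintype.card F))
    (ψ : AddChar F ℂ) (hψ : ψ ≠ 1)
    (Q : LinearMap.BilinForm F V)
    (hsymm : ∀ x y : V, Q x y = Q y x)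
    (hnd : LinearMap.BilinForm.Nondegenerate Q)
    (a : F) (ha : a ≠ 0) :
    weilIndex ψ (a • Q) =
      weilIndex ψ Q * ((quadraticChar F a : ℤ) : ℂ) ^ Module.finrank F V := by
  have hF : ringChar F ≠ 2 := by
    intro h
    have := FiniteField.even_card_of_char_two h
    rw [Nat.odd_iff] at hq
    omega
  have h2 : (2 : F) ≠ 0 := Ring.two_ne_zero hF
  have : Invertible (2 : F) := invertibleOfNonzero h2
  obtain ⟨v, hv⟩ := LinearMap.BilinForm.exists_orthogonal_basis (B := Q) ⟨hsymm⟩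
  have hne : ∀ i, Q (v i) (v i) ≠ 0 :=
    fun i => LinearMap.BilinForm.iIsOrtho.not_isOrtho_basis_self_of_nondegenerate hv hnd i
  have hv' : ∀ i j, i ≠ j → Q (v i) (v j) = 0 := fun i j hij => hv hij
  unfold weilIndex
  rw [wi_sum ψ Q v hv', wi_sum ψ (a • Q) v (fun i j hij => by simp [hv' i j hij]), mul_assoc]
  congr 1
  have key : ∀ i, ∑ t : F, ψ ((a • Q) (v i) (v i) / 2 * t ^ 2) =
      (∑ t : F, ψ (Q (v i) (v i) / 2 * t ^ 2)) * ((quadraticChar F a : ℤ) : ℂ) := by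
    intro i
    have hc := div_ne_zero (hne i) h2
    have e : (a • Q) (v i) (v i) / 2 = a * (Q (v i) (v i) / 2) := by
      simp [mul_div_assoc]
    rw [e, wi_one_dim hF ψ hψ _ hc, wi_one_dim hF ψ hψ _ (mul_ne_zero ha hc), map_mul]
    push_cast
    ring
  rw [Finset.prod_congr rfl fun i _ => key i, Finset.prod_mul_distrib]
  simp
end

section
/- Let F be a finite field of odd cardinality q and ψ : F → ℂ a nontrivial additive character. Let J ∈ M_{2n}(F) be the standard symplectic matrix (J = [[0, 1_n], [−1_n, 0]] in block form) and sp(2n,F) = {X ∈ M_{2n}(F) : Xᵗ J + J X = 0}, an F-vector space of dimension n(2n+1). Then q^{-n(2n+1)/2} ∑_{X ∈ sp(2n,F)} ψ(tr(X²)/2) = ε(ψ)^n, where ε(ψ) = q^{-1/2} ∑_{x ∈ F} ψ(x²). (This is the Weil index of sp(2n) with respect to the trace pairing ⟨X,Y⟩ = tr(XY).) -/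
open Finset Matrix

lemma wsp_sum_split {M : Type*} [AddCommMonoid M] {n : ℕ} (f : Fin n → Fin n → M) :
    ∑ i, ∑ j, f i j = ∑ i, f i i +
      ∑ p : {p : Fin n × Fin n // p.1 < p.2}, (f p.1.1 p.1.2 + f p.1.2 p.1.1) := by
  have h1 : ∀ i j, f i j = (if i = j then f i j else 0) +
      ((if i < j then f i j else 0) + (if j < i then f i j else 0)) := by
    intro i j
    rcases lt_trichotomy i j with h | h | h
    · simp [h, h.ne, h.not_gt]
    · simp [h]
    · simp [h, h.ne', h.not_gt]
  have h2 : ∀ g : Fin n → Fin n → M, ∑ p : {p : Fin n × Fin n // p.1 < p.2}, g p.1.1 p.1.2 =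
      ∑ i, ∑ j, if i < j then g i j else 0 := by
    intro g
    rw [← Fintype.sum_prod_type' (f := fun i j => if i < j then g i j else 0),
      ← Finset.sum_filter]
    exact (Finset.sum_subtype (Finset.univ.filter fun p : Fin n × Fin n => p.1 < p.2)
      (by simp) (fun p => g p.1 p.2)).symm
  rw [Finset.sum_add_distrib, h2 f, h2 (fun i j => f j i)]
  rw [Finset.sum_comm (f := fun i j => if i < j then f j i else 0)]
  conv_lhs => enter [2, i, 2, j]; rw [h1 i j]
  simp [Finset.sum_add_distrib]

/-- Matrix with diagonal `d`, upper part `u`, lower part `l`. -/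
def wspM {F : Type*} {n : ℕ} (d : Fin n → F) (u l : {p : Fin n × Fin n // p.1 < p.2} → F) :
    Matrix (Fin n) (Fin n) F := fun i j =>
  if h : i < j then u ⟨(i, j), h⟩ else if h : j < i then l ⟨(j, i), h⟩ else d i

lemma wspM_diag {F : Type*} {n : ℕ} (d : Fin n → F)
    (u l : {p : Fin n × Fin n // p.1 < p.2} → F) (i : Fin n) : wspM d u l i i = d i := by
  simp [wspM]

lemma wspM_upper {F : Type*} {n : ℕ} (d : Fin n → F)
    (u l : {p : Fin n × Fin n // p.1 < p.2} → F) (p : {p : Fin n × Fin n // p.1 < p.2}) :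
    wspM d u l p.1.1 p.1.2 = u p := by
  simp [wspM, p.2]

lemma wspM_lower {F : Type*} {n : ℕ} (d : Fin n → F)
    (u l : {p : Fin n × Fin n // p.1 < p.2} → F) (p : {p : Fin n × Fin n // p.1 < p.2}) :
    wspM d u l p.1.2 p.1.1 = l p := by
  simp [wspM, p.2, p.2.not_gt]

lemma wspM_transpose {F : Type*} {n : ℕ} (d : Fin n → F)
    (u l : {p : Fin n × Fin n // p.1 < p.2} → F) : (wspM d u l)ᵀ = wspM d l u := by
  ext i j
  rcases lt_trichotomy i j with h | h | h
  · simp [wspM, h, h.not_gt]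
  · simp [wspM, h]
  · simp [wspM, h, h.not_gt]

lemma wspM_eq {F : Type*} {n : ℕ} (A : Matrix (Fin n) (Fin n) F) :
    wspM (fun i => A i i) (fun p => A p.1.1 p.1.2) (fun p => A p.1.2 p.1.1) = A := by
  ext i j
  rcases lt_trichotomy i j with h | h | h
  · simp [wspM, h]
  · simp [wspM, h]
  · simp [wspM, h, h.not_gt]

lemma wsp_cond {F : Type*} [Field F] {n : ℕ} (A B C D : Matrix (Fin n) (Fin n) F) :
    ((Matrix.fromBlocks A B C D)ᵀ * Matrix.fromBlocks 0 1 (-1) 0 +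
      Matrix.fromBlocks 0 1 (-1) 0 * Matrix.fromBlocks A B C D = 0) ↔
      (Bᵀ = B ∧ Cᵀ = C ∧ D = -Aᵀ) := by
  rw [← Matrix.fromBlocks_zero, Matrix.fromBlocks_transpose, Matrix.fromBlocks_multiply,
    Matrix.fromBlocks_multiply, Matrix.fromBlocks_add, Matrix.fromBlocks_inj]
  simp only [Matrix.mul_zero, Matrix.zero_mul, Matrix.mul_one, Matrix.one_mul, Matrix.mul_neg,
    Matrix.neg_mul, zero_add, add_zero]
  constructor
  · rintro ⟨h1, h2, h3, h4⟩
    refine ⟨?_, ?_, ?_⟩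
    · exact add_neg_eq_zero.1 h4
    · exact (neg_add_eq_zero.1 h1)
    · exact (neg_eq_of_add_eq_zero_right h2).symm
  · rintro ⟨h1, h2, h3⟩
    subst h3
    simp [h1, h2]

/-- Coordinates on `sp(2n)`. -/
def wspEquiv (F : Type*) [Field F] (n : ℕ) :
    ((Fin n → F × F × F) × ({p : Fin n × Fin n // p.1 < p.2} → F × F × F × F)) ≃
    {X : Matrix (Fin n ⊕ Fin n) (Fin n ⊕ Fin n) F //
            Xᵀ * Matrix.fromBlocks 0 1 (-1) 0 + Matrix.fromBlocks 0 1 (-1) 0 * X = 0} where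
  toFun z := ⟨Matrix.fromBlocks
      (wspM (fun i => (z.1 i).1) (fun p => (z.2 p).1) (fun p => (z.2 p).2.1))
      (wspM (fun i => (z.1 i).2.1) (fun p => (z.2 p).2.2.1) (fun p => (z.2 p).2.2.1))
      (wspM (fun i => (z.1 i).2.2) (fun p => (z.2 p).2.2.2) (fun p => (z.2 p).2.2.2))
      (-(wspM (fun i => (z.1 i).1) (fun p => (z.2 p).1) (fun p => (z.2 p).2.1))ᵀ),
    (wsp_cond _ _ _ _).2 ⟨wspM_transpose _ _ _, wspM_transpose _ _ _, rfl⟩⟩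
  invFun X := (fun i => (X.1.toBlocks₁₁ i i, X.1.toBlocks₁₂ i i, X.1.toBlocks₂₁ i i),
    fun p => (X.1.toBlocks₁₁ p.1.1 p.1.2, X.1.toBlocks₁₁ p.1.2 p.1.1,
      X.1.toBlocks₁₂ p.1.1 p.1.2, X.1.toBlocks₂₁ p.1.1 p.1.2))
  left_inv z := by
    simp only [Matrix.toBlocks_fromBlocks₁₁, Matrix.toBlocks_fromBlocks₁₂,
      Matrix.toBlocks_fromBlocks₂₁, wspM_diag, wspM_upper, wspM_lower]
  right_inv X := by
    obtain ⟨X, hX⟩ := X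
    apply Subtype.ext
    rw [← Matrix.fromBlocks_toBlocks X] at hX
    obtain ⟨h1, h2, h3⟩ := (wsp_cond _ _ _ _).1 hX
    refine Eq.trans ?_ (Matrix.fromBlocks_toBlocks X)
    refine Matrix.fromBlocks_inj.2 ?_
    have hs : ∀ A : Matrix (Fin n) (Fin n) F, Aᵀ = A →
        wspM (fun i => A i i) (fun p => A p.1.1 p.1.2) (fun p => A p.1.1 p.1.2) = A := by
      intro A hA
      conv_rhs => rw [← wspM_eq A]
      congr 1
      funext p
      conv_lhs => rw [← hA]
      rfl
    refine ⟨wspM_eq X.toBlocks₁₁, hs _ h1, hs _ h2, ?_⟩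
    rw [h3]
    congr 2
    exact wspM_eq X.toBlocks₁₁

lemma wsp_trace_fromBlocks {F : Type*} [Field F] {n : ℕ} (A B C D : Matrix (Fin n) (Fin n) F) :
    (Matrix.fromBlocks A B C D).trace = A.trace + D.trace := by
  simp [Matrix.trace, Fintype.sum_sum_type]

lemma wsp_map_sum {F : Type*} [Field F] (ψ : AddChar F ℂ) {ι : Type*} (s : Finset ι) (f : ι → F) :
    ψ (∑ i ∈ s, f i) = ∏ i ∈ s, ψ (f i) := by
  classical
  induction s using Finset.induction_on with
  | empty => simp
  | insert a s ha ih => rw [Finset.sum_insert ha, Finset.prod_insert ha, AddChar.map_add_eq_mul, ih]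

lemma wsp_trace {F : Type*} [Field F] (h2 : (2 : F) ≠ 0) (n : ℕ)
    (z : (Fin n → F × F × F) × ({p : Fin n × Fin n // p.1 < p.2} → F × F × F × F)) :
    ((wspEquiv F n z).1 * (wspEquiv F n z).1).trace / 2 =
      ∑ i, ((z.1 i).1 ^ 2 + (z.1 i).2.1 * (z.1 i).2.2) +
      ∑ p, (2 * (z.2 p).1 * (z.2 p).2.1 + 2 * (z.2 p).2.2.1 * (z.2 p).2.2.2) := by
  have key : ∀ A B C : Matrix (Fin n) (Fin n) F,
      (Matrix.fromBlocks A B C (-Aᵀ) * Matrix.fromBlocks A B C (-Aᵀ)).trace / 2 =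
      ∑ i, ∑ j, (A i j * A j i + B i j * C j i) := by
    intro A B C
    rw [Matrix.fromBlocks_multiply, wsp_trace_fromBlocks, Matrix.trace_add, Matrix.trace_add,
      Matrix.trace_mul_comm C B, neg_mul_neg, ← Matrix.transpose_mul, Matrix.trace_transpose]
    have : (A * A).trace + (B * C).trace = ∑ i, ∑ j, (A i j * A j i + B i j * C j i) := by
      simp [Matrix.trace, Matrix.mul_apply, Finset.sum_add_distrib]
    rw [← this]
    field_simp
    ring
  refine (key _ _ _).trans ?_
  rw [wsp_sum_split]
  simp only [wspM_diag, wspM_upper, wspM_lower]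
  congr 1
  · exact Finset.sum_congr rfl fun i _ => by ring
  · exact Finset.sum_congr rfl fun i _ => by ring

lemma wsp_pair {F : Type*} [Field F] [Fintype F] [DecidableEq F] (ψ : AddChar F ℂ) (hψ : ψ ≠ 1)
    (c : F) (hc : c ≠ 0) :
    ∑ a : F, ∑ b : F, ψ (c * a * b) = (Fintype.card F : ℂ) := by
  have hp : ψ.IsPrimitive := AddChar.IsPrimitive.of_ne_one hψ
  have : ∀ a : F, ∑ b : F, ψ (c * a * b) = if a = 0 then (Fintype.card F : ℂ) else 0 := by
    intro a
    have := AddChar.sum_mulShift (c * a) hp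
    simp only [mul_comm _ (c * a)] at this
    rw [this]
    simp [hc]
  simp [this]

theorem weilIndex_sp {F : Type*} [Field F] [Fintype F] [DecidableEq F]
    (hq : Odd (Fintype.card F))
    (n : ℕ)
    (ψ : AddChar F ℂ) (hψ : ψ ≠ 1) :
    ((Real.sqrt (Fintype.card F) : ℂ))⁻¹ ^ (n * (2 * n + 1)) *
        ∑ X : {X : Matrix (Fin n ⊕ Fin n) (Fin n ⊕ Fin n) F //
            Xᵀ * Matrix.fromBlocks 0 1 (-1) 0 + Matrix.fromBlocks 0 1 (-1) 0 * X = 0},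
          ψ ((X.1 * X.1).trace / 2) =
      (((Real.sqrt (Fintype.card F) : ℂ))⁻¹ * ∑ x : F, ψ (x ^ 2)) ^ n := by
  have h2 : (2 : F) ≠ 0 := by
    apply Ring.two_ne_zero
    intro h
    have := FiniteField.even_card_of_char_two h
    rw [Nat.odd_iff] at hq
    omega
  have hsum : ∀ z : (Fin n → F × F × F) × ({p : Fin n × Fin n // p.1 < p.2} → F × F × F × F),
      ψ (((wspEquiv F n z).1 * (wspEquiv F n z).1).trace / 2) =
      (∏ i, ψ ((z.1 i).1 ^ 2 + (z.1 i).2.1 * (z.1 i).2.2)) *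
      ∏ p, ψ (2 * (z.2 p).1 * (z.2 p).2.1 + 2 * (z.2 p).2.2.1 * (z.2 p).2.2.2) := by
    intro z
    rw [wsp_trace h2, AddChar.map_add_eq_mul, wsp_map_sum, wsp_map_sum]
  have hc : n * n = n + Fintype.card {p : Fin n × Fin n // p.1 < p.2} * 2 := by
    have := wsp_sum_split (fun _ _ : Fin n => 1)
    simpa using this
  have hd : ∑ t : F × F × F, ψ (t.1 ^ 2 + t.2.1 * t.2.2) =
      (∑ x : F, ψ (x ^ 2)) * (Fintype.card F : ℂ) := by
    have := wsp_pair ψ hψ 1 one_ne_zero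
    simp only [one_mul] at this
    rw [← this]
    simp only [Fintype.sum_prod_type, AddChar.map_add_eq_mul, ← Finset.mul_sum,
      Finset.sum_mul]
  have ho : ∑ t : F × F × F × F, ψ (2 * t.1 * t.2.1 + 2 * t.2.2.1 * t.2.2.2) =
      (Fintype.card F : ℂ) ^ 2 := by
    have := wsp_pair ψ hψ 2 h2
    simp only [Fintype.sum_prod_type, AddChar.map_add_eq_mul, ← Finset.mul_sum, this,
      ← Finset.sum_mul]
    ring
  have htot : ∑ X : {X : Matrix (Fin n ⊕ Fin n) (Fin n ⊕ Fin n) F //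
            Xᵀ * Matrix.fromBlocks 0 1 (-1) 0 + Matrix.fromBlocks 0 1 (-1) 0 * X = 0},
          ψ ((X.1 * X.1).trace / 2) = (∑ x : F, ψ (x ^ 2)) ^ n * (Fintype.card F : ℂ) ^ (n * n) := by
    rw [← (wspEquiv F n).sum_comp]
    simp only [hsum]
    rw [Fintype.sum_prod_type]
    simp only [← Finset.mul_sum, ← Finset.sum_mul]
    rw [← Fintype.prod_sum (fun (_ : Fin n) (t : F × F × F) => ψ (t.1 ^ 2 + t.2.1 * t.2.2)),
      ← Fintype.prod_sum (fun (_ : {p : Fin n × Fin n // p.1 < p.2}) (t : F × F × F × F) =>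
        ψ (2 * t.1 * t.2.1 + 2 * t.2.2.1 * t.2.2.2)), hd, ho, hc]
    simp only [Finset.prod_const, Finset.card_univ, Fintype.card_fin]
    rw [mul_pow, ← pow_mul, pow_add, mul_comm 2]
    ring
  rw [htot]
  have hs : (Fintype.card F : ℂ) = (Real.sqrt (Fintype.card F) : ℂ) ^ 2 := by
    rw [← Complex.ofReal_pow, Real.sq_sqrt (Nat.cast_nonneg _)]
    simp
  have hs0 : (Real.sqrt (Fintype.card F) : ℂ) ≠ 0 := by
    rw [Complex.ofReal_ne_zero]
    exact (Real.sqrt_pos.2 (Nat.cast_pos.2 Fintype.card_pos)).ne'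
  rw [hs]
  generalize (Real.sqrt (Fintype.card F) : ℂ) = s at hs0
  generalize ∑ x : F, ψ (x ^ 2) = G
  rw [mul_pow, show n * (2 * n + 1) = 2 * (n * n) + n by ring, pow_add, ← pow_mul, inv_pow,
    inv_pow]
  field_simp
end

section
/- Let F be a finite field of odd cardinality q and ψ : F → ℂ a nontrivial additive character. Let m ≥ 1, let J ∈ M_m(F) be the antidiagonal identity matrix (J_{i,j} = 1 if i + j = m + 1, and 0 otherwise), which defines a split symmetric bilinear form, and let so(m,F) = {X ∈ M_m(F) : Xᵗ J + J X = 0}, an F-vector space of dimension m(m−1)/2. Then q^{-m(m−1)/4} ∑_{X ∈ so(m,F)} ψ(tr(X²)/2) = ε(ψ)^{⌊m/2⌋}, where ε(ψ) = q^{-1/2} ∑_{x ∈ F} ψ(x²). (This gives the Weil indices γ(spin(2n+1)) = γ(spin(2n)) = ε(ψ)^n for the split orthogonal Lie algebras with the trace pairing.) -/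
open Finset Matrix

/-- Matrices anti-invariant under the twisted transpose attached to `s`. -/
def WSo {n F : Type*} [Field F] (s : n → n) (X : Matrix n n F) : Prop :=
  ∀ i j, X (s j) (s i) = - X i j

lemma w_sum_equiv {α β : Type*} {ia : Fintype α} {ib : Fintype β} (e : α ≃ β) (f : α → ℂ)
    (g : β → ℂ) (h : ∀ x, f x = g (e x)) : ∑ x, f x = ∑ x, g x :=
  Fintype.sum_equiv e f g h

lemma w_sum_prod {α β γ δ : Type*} {ia : Fintype α} {ib : Fintype β} {ic : Fintype γ}
    {id : Fintype δ} (e : α × β × γ ≃ δ) (g : δ → ℂ) (f₁ : α → ℂ) (f₂ : β → ℂ) (f₃ : γ → ℂ)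
    (h : ∀ a b c, g (e (a, b, c)) = f₁ a * (f₂ b * f₃ c)) :
    ∑ x, g x = (∑ a, f₁ a) * ((∑ b, f₂ b) * ∑ c, f₃ c) := by
  rw [← Equiv.sum_comp e, Fintype.sum_prod_type, Finset.sum_mul]
  refine Finset.sum_congr rfl fun A _ => ?_
  rw [Fintype.sum_prod_type, Finset.sum_mul, Finset.mul_sum]
  refine Finset.sum_congr rfl fun x _ => ?_
  rw [Finset.mul_sum, Finset.mul_sum]
  exact Finset.sum_congr rfl fun p _ => h _ _ _

lemma w_sum_single {α : Type*} {ia : Fintype α} (f : α → ℂ) (a : α) (h : ∀ x, x = a) :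
    ∑ x, f x = f a :=
  Fintype.sum_eq_single a fun x hx => absurd (h x) hx

open Classical in
noncomputable def wS {F : Type*} [Field F] [Fintype F] (ψ : AddChar F ℂ) {n : Type*} [Fintype n]
    (s : n → n) : ℂ :=
  ∑ X : {X : Matrix n n F // WSo s X}, ψ ((X.1 * X.1).trace / 2)

lemma wS_congr {F : Type*} [Field F] [Fintype F] (ψ : AddChar F ℂ) {n k : Type*} [Fintype n]
    [Fintype k] (s : n → n) (t : k → k) (e : n ≃ k) (h : ∀ i, t (e i) = e (s i)) :
    wS ψ s = wS ψ t := by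
  classical
  unfold wS
  refine w_sum_equiv ((Matrix.reindex e e).subtypeEquiv ?_) _ _ ?_
  · intro X
    constructor
    · intro H i j
      obtain ⟨i, rfl⟩ := e.surjective i
      obtain ⟨j, rfl⟩ := e.surjective j
      simpa [h] using H i j
    · intro H i j
      simpa [h] using H (e i) (e j)
  · rintro ⟨X, hX⟩
    simp only [Equiv.subtypeEquiv_apply, Matrix.reindex_apply, Matrix.submatrix_mul_equiv]
    congr 2
    simp only [Matrix.trace, Matrix.diag, Matrix.submatrix_apply]
    exact (Equiv.sum_comp e.symm (fun i => (X * X) i i)).symm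

lemma w_two {F : Type*} [Field F] [Fintype F] (hq : Odd (Fintype.card F)) : (2 : F) ≠ 0 := by
  intro h
  have : ringChar F = 2 := by
    have h1 : ringChar F ∣ 2 := (ringChar.spec F 2).1 (by exact_mod_cast h)
    rcases (Nat.dvd_prime Nat.prime_two).1 h1 with h2 | h2
    · exact absurd h2 CharP.ringChar_ne_one
    · exact h2
  have := FiniteField.even_card_of_char_two this
  rw [Nat.odd_iff] at hq
  omega

lemma w_plane {F : Type*} [Field F] [Fintype F] (hq : Odd (Fintype.card F))
    (ψ : AddChar F ℂ) (hψ : ψ ≠ 1) :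
    ∑ p : F × F, ψ (2 * (p.1 * p.2)) = (Fintype.card F : ℂ) := by
  classical
  rw [Fintype.sum_prod_type]
  have h2 := w_two hq
  have key : ∀ a : F, ∑ b : F, ψ (2 * (a * b)) = if a = 0 then (Fintype.card F : ℂ) else 0 := by
    intro a
    have := AddChar.sum_mulShift (ψ := ψ) (2 * a) (AddChar.IsPrimitive.of_ne_one hψ)
    simp only [mul_eq_zero, h2, false_or] at this
    push_cast at this
    rw [← this]
    refine Finset.sum_congr rfl fun b _ => ?_
    congr 1; ring
  simp [key]

lemma w_map_sum {F : Type*} [Field F] (ψ : AddChar F ℂ) {n : Type*} [Fintype n] (f : n → F) :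
    ψ (∑ i, f i) = ∏ i, ψ (f i) := by
  classical
  induction (Finset.univ : Finset n) using Finset.induction_on with
  | empty => simp
  | insert a s ha ih => rw [Finset.sum_insert ha, Finset.prod_insert ha, AddChar.map_add_eq_mul, ih]

lemma w_hyp {F : Type*} [Field F] [Fintype F] (hq : Odd (Fintype.card F))
    (ψ : AddChar F ℂ) (hψ : ψ ≠ 1) {n : Type*} [Fintype n] [DecidableEq n] :
    ∑ p : n → F × F, ψ (2 * ∑ i, (p i).1 * (p i).2) =
      (Fintype.card F : ℂ) ^ (Fintype.card n) := by
  have : ∀ p : n → F × F, ψ (2 * ∑ i, (p i).1 * (p i).2)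
      = ∏ i, ψ (2 * ((p i).1 * (p i).2)) := by
    intro p
    rw [Finset.mul_sum]
    exact w_map_sum ψ _
  simp_rw [this]
  rw [← Fintype.piFinset_univ, ← Finset.prod_univ_sum (fun _ => Finset.univ)
    (fun (_ : n) (x : F × F) => ψ (2 * (x.1 * x.2)))]
  simp [w_plane hq ψ hψ]

def wBuild {n F : Type*} [Field F] (s : n → n) (A : Matrix n n F) (x : F) (p : n → F × F) :
    Matrix (n ⊕ Bool) (n ⊕ Bool) F :=
  Matrix.fromBlocks A (Matrix.of fun i j => bif j then (p i).1 else - (p (s i)).2)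
    (Matrix.of fun j i => bif j then (p i).2 else - (p (s i)).1)
    (Matrix.of fun i j => if i = j then (bif i then x else -x) else 0)

lemma wBuild_so {n F : Type*} [Field F] (s : n → n) (hs : ∀ i, s (s i) = i)
    (A : Matrix n n F) (hA : WSo s A) (x : F) (p : n → F × F) :
    WSo (Sum.map s not) (wBuild s A x p) := by
  rintro (i | _ | _) (j | _ | _) <;> simp [wBuild, hs, hA _ _]

lemma wBuild_trace {n F : Type*} [Fintype n] [Field F] (s : n → n) (hs : ∀ i, s (s i) = i)
    (A : Matrix n n F) (x : F) (p : n → F × F) :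
    (wBuild s A x p * wBuild s A x p).trace
      = (A * A).trace + 2 * x ^ 2 + 4 * ∑ i, (p i).1 * (p i).2 := by
  have h : ∑ i, (p (s i)).1 * (p (s i)).2 = ∑ i, (p i).1 * (p i).2 :=
    Equiv.sum_comp (⟨s, s, hs, hs⟩ : n ≃ n) (fun i => (p i).1 * (p i).2)
  have h' : ∑ i, (p (s i)).2 * (p (s i)).1 = ∑ i, (p i).1 * (p i).2 := by
    rw [← h]; exact Finset.sum_congr rfl fun _ _ => mul_comm _ _
  have h'' : ∑ i, (p i).2 * (p i).1 = ∑ i, (p i).1 * (p i).2 := by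
    exact Finset.sum_congr rfl fun _ _ => mul_comm _ _
  simp only [wBuild, Matrix.trace, Matrix.diag, Fintype.sum_sum_type,
    Matrix.fromBlocks_apply₁₁, Matrix.fromBlocks_apply₂₂, Matrix.mul_apply,
    Fintype.sum_bool, Finset.sum_add_distrib]
  simp [h, h', h'']
  ring

noncomputable def wEquiv {n F : Type*} [Field F] (s : n → n) (hs : ∀ i, s (s i) = i)
    (h2 : (2 : F) ≠ 0) :
    ({A : Matrix n n F // WSo s A} × F × (n → F × F)) ≃
      {X : Matrix (n ⊕ Bool) (n ⊕ Bool) F // WSo (Sum.map s not) X} where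
  toFun d := ⟨wBuild s d.1.1 d.2.1 d.2.2, wBuild_so s hs _ d.1.2 _ _⟩
  invFun X := (⟨Matrix.of fun i j => X.1 (Sum.inl i) (Sum.inl j), fun i j => by simpa using X.2 (Sum.inl i) (Sum.inl j)⟩,
    X.1 (Sum.inr true) (Sum.inr true),
    fun i => (X.1 (Sum.inl i) (Sum.inr true), X.1 (Sum.inr true) (Sum.inl i)))
  left_inv := by
    rintro ⟨⟨A, hA⟩, x, p⟩
    simp [wBuild]
    rfl
  right_inv := by
    rintro ⟨X, hX⟩
    have z : ∀ a : F, a = -a → a = 0 := fun a ha => by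
      have : 2 * a = 0 := by linear_combination ha
      simpa [h2] using this
    apply Subtype.ext
    ext (i | _ | _) (j | _ | _)
    · simp [wBuild]
    · have := hX (Sum.inl i) (Sum.inr false)
      simp at this
      simp [wBuild, this]
    · simp [wBuild]
    · have := hX (Sum.inr false) (Sum.inl j)
      simp at this
      simp [wBuild, this]
    · have := hX (Sum.inr false) (Sum.inr false)
      simp at this
      simp [wBuild, this]
    · have := hX (Sum.inr false) (Sum.inr true)
      simp at this
      simp [wBuild, z _ this]
    · simp [wBuild]
    · have := hX (Sum.inr true) (Sum.inr false)
      simp at this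
      simp [wBuild, z _ this]
    · simp [wBuild]

lemma wS_step {F : Type*} [Field F] [Fintype F] (hq : Odd (Fintype.card F))
    (ψ : AddChar F ℂ) (hψ : ψ ≠ 1) {n : Type*} [Fintype n]
    (s : n → n) (hs : ∀ i, s (s i) = i) :
    wS ψ (Sum.map s not : n ⊕ Bool → n ⊕ Bool) =
      wS ψ s * ((∑ x : F, ψ (x ^ 2)) * (Fintype.card F : ℂ) ^ (Fintype.card n)) := by
  classical
  have h2 := w_two hq
  rw [← w_hyp hq ψ hψ (n := n)]
  unfold wS
  refine w_sum_prod (wEquiv s hs h2) _ _ _ _ ?_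
  intro A x p
  simp only [wEquiv, Equiv.coe_fn_mk, wBuild_trace s hs]
  rw [← AddChar.map_add_eq_mul, ← AddChar.map_add_eq_mul]
  congr 1
  field_simp
  ring

lemma wS_fin {F : Type*} [Field F] [Fintype F] (hq : Odd (Fintype.card F))
    (ψ : AddChar F ℂ) (hψ : ψ ≠ 1) (m : ℕ) :
    wS ψ (Fin.rev : Fin (m + 2) → Fin (m + 2)) =
      wS ψ (Fin.rev : Fin m → Fin m) * ((∑ x : F, ψ (x ^ 2)) * (Fintype.card F : ℂ) ^ m) := by
  have h := wS_step hq ψ hψ (Fin.rev : Fin m → Fin m) Fin.rev_rev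
  rw [Fintype.card_fin] at h
  rw [← h]
  symm
  let f : Fin m ⊕ Bool → Fin (m + 2) :=
    Sum.elim (fun i => i.succ.castSucc) (fun b => bif b then Fin.last _ else 0)
  have hf : Function.Bijective f := by
    rw [Fintype.bijective_iff_injective_and_card]
    refine ⟨?_, by simp⟩
    rintro (i | _ | _) (j | _ | _) <;> simp [f, Fin.ext_iff] <;> omega
  refine wS_congr ψ _ _ (Equiv.ofBijective f hf) ?_
  rintro (i | _ | _) <;> simp [f, Fin.ext_iff, Fin.val_rev]
  omega

lemma wS_main {F : Type*} [Field F] [Fintype F] (hq : Odd (Fintype.card F))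
    (ψ : AddChar F ℂ) (hψ : ψ ≠ 1) : ∀ m : ℕ,
    ((Real.sqrt (Fintype.card F) : ℂ))⁻¹ ^ (m * (m - 1) / 2) *
      wS ψ (Fin.rev : Fin m → Fin m) =
      (((Real.sqrt (Fintype.card F) : ℂ))⁻¹ * ∑ x : F, ψ (x ^ 2)) ^ (m / 2)
  | 0 => by
    have : Unique {X : Matrix (Fin 0) (Fin 0) F // WSo Fin.rev X} :=
      ⟨⟨⟨0, fun i => i.elim0⟩⟩, fun a => Subsingleton.elim _ _⟩
    simp [wS, Matrix.trace]
  | 1 => by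
    have h2 := w_two hq
    have z : ∀ a : {X : Matrix (Fin 1) (Fin 1) F // WSo Fin.rev X}, a = ⟨0, fun i j => by simp⟩ := by
      rintro ⟨X, hX⟩
      apply Subtype.ext
      ext i j
      have := hX 0 0
      rw [Subsingleton.elim i 0, Subsingleton.elim j 0]
      simp at this
      have h : 2 * X 0 0 = 0 := by linear_combination this
      simpa [h2] using h
    unfold wS
    rw [w_sum_single _ _ z]
    simp
  | m + 2 => by
    have ih := wS_main hq ψ hψ m
    have e1 : (m + 2) * (m + 2 - 1) / 2 = m * (m - 1) / 2 + (2 * m + 1) := by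
      rcases m with _ | m
      · rfl
      · simp only [Nat.add_sub_cancel, show m + 1 + 2 - 1 = m + 2 by omega]
        rw [show (m + 1 + 2) * (m + 2) = (m + 1) * m + (2 * (m + 1) + 1) * 2 by ring,
          Nat.add_mul_div_right _ _ two_pos]
    have e2 : (m + 2) / 2 = m / 2 + 1 := by omega
    have e3 : ((Real.sqrt (Fintype.card F) : ℂ))⁻¹ ^ 2 * (Fintype.card F : ℂ) = 1 := by
      have h0 : (Fintype.card F : ℂ) ≠ 0 := by simp
      have : ((Real.sqrt (Fintype.card F) : ℂ)) ^ 2 = (Fintype.card F : ℂ) := by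
        rw [← Complex.ofReal_pow, Real.sq_sqrt (Nat.cast_nonneg _)]; simp
      rw [inv_pow, this, inv_mul_cancel₀ h0]
    rw [wS_fin hq ψ hψ, e1, e2, pow_succ _ (m / 2), ← ih, pow_add, pow_succ _ (2 * m), pow_mul]
    set c := ((Real.sqrt (Fintype.card F) : ℂ))⁻¹
    have e4 : (c ^ 2) ^ m * (Fintype.card F : ℂ) ^ m = 1 := by rw [← mul_pow, e3, one_pow]
    linear_combination (c ^ (m * (m - 1) / 2) * wS ψ (Fin.rev : Fin m → Fin m) * c *
      ∑ x : F, ψ (x ^ 2)) * e4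

lemma wSo_iff {F : Type*} [Field F] (m : ℕ) (X : Matrix (Fin m) (Fin m) F) :
    Xᵀ * (Matrix.of fun i j : Fin m => if (i : ℕ) + (j : ℕ) + 1 = m then (1 : F) else 0)
      + (Matrix.of fun i j : Fin m => if (i : ℕ) + (j : ℕ) + 1 = m then (1 : F) else 0)
        * X = 0 ↔ WSo Fin.rev X := by
  have a1 : ∀ i j : Fin m, ((i : ℕ) + (j : ℕ) + 1 = m) ↔ i = j.rev := by
    intro i j
    rw [Fin.ext_iff, Fin.val_rev]; omega
  have a2 : ∀ i j : Fin m, (i = j.rev) ↔ j = i.rev := by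
    intro i j
    rw [Fin.ext_iff, Fin.ext_iff, Fin.val_rev, Fin.val_rev]; omega
  have key : ∀ i j, (Xᵀ * (Matrix.of fun i j : Fin m => if (i : ℕ) + (j : ℕ) + 1 = m then (1 : F) else 0)
      + (Matrix.of fun i j : Fin m => if (i : ℕ) + (j : ℕ) + 1 = m then (1 : F) else 0)
        * X) i j = X j.rev i + X i.rev j := by
    intro i j
    simp only [Matrix.add_apply, Matrix.mul_apply, Matrix.of_apply, Matrix.transpose_apply]
    congr 1
    · simp [a1]
    · simp only [a1, a2]; simp
  constructor
  · intro h i j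
    have := key i.rev j
    rw [h, Fin.rev_rev] at this
    simp only [Matrix.zero_apply] at this
    linear_combination -this
  · intro h
    ext i j
    rw [key]
    have := h i.rev j
    rw [Fin.rev_rev] at this
    rw [this]; simp

/-- The Weil index of the split orthogonal Lie algebra `so(m)` with the trace pairing equals
`ε(ψ)^{⌊m/2⌋}`: `q^{-m(m-1)/4} ∑_{X ∈ so(m,F)} ψ(tr(X²)/2) = ε(ψ)^{⌊m/2⌋}`, where `so(m,F)`
is defined by the antidiagonal identity matrix `J` via `Xᵗ J + J X = 0`. -/
theorem weilIndex_so_split {F : Type*} [Field F] [Fintype F] [DecidableEq F]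
    (hq : Odd (Fintype.card F))
    (m : ℕ) (hm : 1 ≤ m)
    (ψ : AddChar F ℂ) (hψ : ψ ≠ 1) :
    ((Real.sqrt (Fintype.card F) : ℂ))⁻¹ ^ (m * (m - 1) / 2) *
        ∑ X : {X : Matrix (Fin m) (Fin m) F //
            Xᵀ * (Matrix.of fun i j : Fin m => if (i : ℕ) + (j : ℕ) + 1 = m then (1 : F) else 0)
              + (Matrix.of fun i j : Fin m => if (i : ℕ) + (j : ℕ) + 1 = m then (1 : F) else 0)
                * X = 0},
          ψ ((X.1 * X.1).trace / 2) =
      (((Real.sqrt (Fintype.card F) : ℂ))⁻¹ * ∑ x : F, ψ (x ^ 2)) ^ (m / 2) := by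
  rw [← wS_main hq ψ hψ m]
  congr 1
  unfold wS
  refine w_sum_equiv (Equiv.subtypeEquivRight fun X => wSo_iff m X) _ _ ?_
  intro X
  rw [Equiv.subtypeEquivRight_apply_coe]
end

section
/- Let F be a finite field of odd cardinality q and characteristic p, let ψ : F → ℂ a nontrivial additive character, n ≥ 1, and suppose the symmetric invertible matrix J ∈ M_{2n}(F) satisfies χ((−1)^n · det J) = −1, where χ is the quadratic character of F (so J defines a non-split quadratic form in 2n variables). Let so_J(2n,F) = {X ∈ M_{2n}(F) : Xᵗ J + J X = 0}, an F-vector space of dimension n(2n−1). Then q^{-n(2n−1)/2} ∑_{X ∈ so_J(2n,F)} ψ(tr(X²)/2) = −ε(ψ)^n, where ε(ψ) = q^{-1/2} ∑_{x ∈ F} ψ(x²). (This is the Weil index γ(spin_{F_{q²}/F_q}(2n)) = −ε(ψ)^n of the quasi-split non-split even orthogonal Lie algebra with the trace pairing.) -/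
open Finset Matrix

lemma pairs_prod {M : Type*} [CommMonoid M] (c : M) : ∀ (N : ℕ) (f : Fin N → M),
    ∏ i, ∏ j ∈ Ioi i, (c * f i * f j) = c ^ (N.choose 2) * (∏ i, f i) ^ (N - 1)
  | 0, f => by simp
  | (N+1), f => by
    have ih := pairs_prod c N (fun i => f i.succ)
    have h1 : (∏ i : Fin N, f i.succ) * (∏ i : Fin N, f i.succ) ^ (N - 1)
        = (∏ i : Fin N, f i.succ) ^ N := by
      cases N with
      | zero => simp
      | succ k => rw [Nat.add_sub_cancel, pow_succ']
    rw [Fin.prod_univ_succ, Fin.prod_Ioi_zero]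
    simp only [Fin.prod_Ioi_succ, ih]
    rw [Finset.prod_mul_distrib, Finset.prod_const, Finset.card_univ, Fintype.card_fin,
      Fin.prod_univ_succ, Nat.add_sub_cancel, Nat.choose_succ_succ' N 1, Nat.choose_one_right,
      mul_pow, mul_pow, pow_add, ← h1]
    simp only [mul_assoc, mul_comm, mul_left_comm]

lemma pairs_sum {M : Type*} [CommRing M] : ∀ (N : ℕ) (h : Fin N → Fin N → M)
    (hs : ∀ i j, h i j = h j i) (h0 : ∀ i, h i i = 0),
    ∑ i, ∑ j, h i j = 2 * ∑ i, ∑ j ∈ Ioi i, h i j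
  | 0, h => by simp
  | (N+1), h => fun hs h0 => by
    have ih := pairs_sum N (fun i j => h i.succ j.succ) (fun i j => hs _ _) (fun i => h0 _)
    rw [Fin.sum_univ_succ, Fin.sum_univ_succ (fun i => ∑ j ∈ Ioi i, h i j), Fin.sum_Ioi_zero]
    simp only [Fin.sum_Ioi_succ, Fin.sum_univ_succ, h0, Finset.sum_add_distrib, ih]
    simp only [fun i : Fin N => hs i.succ 0]
    ring

lemma gauss_eq {F : Type*} [Field F] [Fintype F] [DecidableEq F]
    (hF : ringChar F ≠ 2) (ψ : AddChar F ℂ) (hψ : ψ ≠ 1) :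
    ∑ x : F, ψ (x ^ 2) = gaussSum ((quadraticChar F).ringHomComp (Int.castRingHom ℂ)) ψ := by
  have hsum : ∑ y : F, ψ y = 0 := AddChar.sum_eq_zero_of_ne_one hψ
  have : ∀ y : F, ∑ x : F with x ^ 2 = y, ψ (x^2) = (quadraticChar F y + 1 : ℂ) * ψ y := by
    intro y
    rw [Finset.sum_congr rfl (g := fun _ => ψ y) (by intro x hx; rw [(Finset.mem_filter.1 hx).2])]
    rw [Finset.sum_const, nsmul_eq_mul]
    have := quadraticChar_card_sqrts hF y
    congr 1
    rw [← Int.cast_one, ← Int.cast_add, ← this]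
    simp
  rw [← Finset.sum_fiberwise Finset.univ (fun x : F => x ^ 2), Finset.sum_congr rfl (fun y _ => this y)]
  simp [add_mul, Finset.sum_add_distrib, hsum, gaussSum]

lemma gauss_shift {F : Type*} [Field F] [Fintype F] [DecidableEq F]
    (hF : ringChar F ≠ 2) (ψ : AddChar F ℂ) (hψ : ψ ≠ 1) (a : F) (ha : a ≠ 0) :
    ∑ x : F, ψ (a * x ^ 2) = (quadraticChar F a : ℂ) * ∑ x : F, ψ (x ^ 2) := by
  have h1 : ψ.mulShift a ≠ 1 := by
    intro h
    apply hψ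
    ext x
    have := congrArg (fun φ : AddChar F ℂ => φ (a⁻¹ * x)) h
    simpa [AddChar.mulShift_apply, ha] using this
  have h2 := gauss_eq hF (ψ.mulShift a) h1
  simp only [AddChar.mulShift_apply] at h2
  rw [h2, gauss_eq hF ψ hψ]
  have h3 := gaussSum_mulShift ((quadraticChar F).ringHomComp (Int.castRingHom ℂ)) ψ (Units.mk0 a ha)
  rw [← h3]
  simp only [Units.val_mk0, MulChar.ringHomComp_apply, ← mul_assoc]
  rw [eq_intCast, ← Int.cast_mul, ← sq, quadraticChar_sq_one ha]; simp

lemma gauss_sq {F : Type*} [Field F] [Fintype F] [DecidableEq F]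
    (hF : ringChar F ≠ 2) (ψ : AddChar F ℂ) (hψ : ψ ≠ 1) :
    (∑ x : F, ψ (x ^ 2)) ^ 2 = (quadraticChar F (-1) : ℂ) * Fintype.card F := by
  rw [gauss_eq hF ψ hψ, gaussSum_sq]
  · simp
  · intro h
    obtain ⟨a, ha⟩ := quadraticChar_exists_neg_one hF
    have := congrArg (fun φ : MulChar F ℂ => φ a) h
    have ha0 : IsUnit a := by
      rw [isUnit_iff_ne_zero]; rintro rfl; simp at ha
    simp [ha, MulChar.one_apply ha0] at this
    norm_num at this
  · exact (quadraticChar_isQuadratic F).comp _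
  · exact AddChar.IsPrimitive.of_ne_one hψ

lemma diagonalize {F : Type*} [Field F] (h2 : (2 : F) ≠ 0) (N : ℕ) (J : Matrix (Fin N) (Fin N) F)
    (hJ : J.IsSymm) : ∃ (P : Matrix (Fin N) (Fin N) F) (d : Fin N → F), IsUnit P ∧
      Pᵀ * J * P = diagonal d := by
  have := invertibleOfNonzero h2
  have hB : (Matrix.toLinearMap₂' F J : LinearMap.BilinForm F (Fin N → F)).IsSymm := by
    refine ⟨fun x y => ?_⟩
    simp only [Matrix.toLinearMap₂'_apply', RingHom.id_apply]
    rw [Matrix.dotProduct_mulVec, ← Matrix.mulVec_transpose, hJ.eq, dotProduct_comm]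
  obtain ⟨v, hv⟩ := LinearMap.BilinForm.exists_orthogonal_basis hB
  let w := v.reindex (finCongr (by simp : Module.finrank F (Fin N → F) = N))
  let P : Matrix (Fin N) (Fin N) F := (Pi.basisFun F (Fin N)).toMatrix w
  have hent : ∀ i j, (Pᵀ * J * P) i j = Matrix.toLinearMap₂' F J (w i) (w j) := by
    intro i j
    rw [Matrix.toLinearMap₂'_apply', Matrix.mul_assoc, Matrix.mul_apply_eq_vecMul]
    simp only [dotProduct, Matrix.mulVec, Matrix.vecMul, Matrix.mul_apply]
    rfl
  refine ⟨P, fun i => (Pᵀ * J * P) i i, ?_, ?_⟩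
  · have := (Pi.basisFun F (Fin N)).invertibleToMatrix w
    exact isUnit_of_invertible P
  · ext i j
    by_cases hij : i = j
    · subst hij; simp
    · rw [diagonal_apply_ne _ hij, hent]
      have := hv (i := (finCongr (by simp : Module.finrank F (Fin N → F) = N)).symm i)
        (j := (finCongr (by simp : Module.finrank F (Fin N → F) = N)).symm j) (by simpa using hij)
      simpa [w, Module.Basis.reindex_apply, LinearMap.IsOrthoᵢ, Function.onFun] using this

/-- The skew matrix (twisted by the diagonal form) attached to a family over pairs `i < j`. -/
def skewOf {F : Type*} [Field F] {N : ℕ} (d : Fin N → F)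
    (a : (i : Fin N) × {j // i < j} → F) : Matrix (Fin N) (Fin N) F :=
  fun i j => (d i)⁻¹ * (if h : i < j then a ⟨i, j, h⟩ else if h : j < i then - a ⟨j, i, h⟩ else 0)

lemma so_diag_iff {F : Type*} [Field F] {N : ℕ} (d : Fin N → F) (X : Matrix (Fin N) (Fin N) F) :
    Xᵀ * diagonal d + diagonal d * X = 0 ↔ ∀ i j, X j i * d j + d i * X i j = 0 := by
  rw [← Matrix.ext_iff]
  simp [Matrix.mul_diagonal, Matrix.diagonal_mul]

/-- Coordinates on the orthogonal Lie algebra of a diagonal form. -/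
def soDiagEquiv {F : Type*} [Field F] (h2 : (2 : F) ≠ 0) {N : ℕ} (d : Fin N → F)
    (hd : ∀ i, d i ≠ 0) : ((i : Fin N) × {j // i < j} → F) ≃
      {X : Matrix (Fin N) (Fin N) F // Xᵀ * diagonal d + diagonal d * X = 0} where
  toFun a := ⟨skewOf d a, by
    rw [so_diag_iff]
    intro i j
    have hi := hd i
    have hj := hd j
    unfold skewOf
    rcases lt_trichotomy i j with h | h | h
    · simp only [h, h.not_gt, dif_pos, dif_neg, not_false_eq_true]; field_simp; ring
    · subst h; simp
    · simp only [h, h.not_gt, dif_pos, dif_neg, not_false_eq_true]; field_simp; ring⟩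
  invFun X := fun p => d p.1 * X.1 p.1 p.2.1
  left_inv a := by
    ext ⟨i, j, h⟩
    have hi := hd i
    simp only [skewOf, h, dif_pos]; field_simp
  right_inv X := by
    obtain ⟨X, hX⟩ := X
    rw [so_diag_iff] at hX
    ext i j
    have hi := hd i
    have hj := hd j
    have e := hX i j
    simp only [skewOf]
    rcases lt_trichotomy i j with h | h | h
    · simp only [h, dif_pos]; field_simp
    · subst h
      simp only [lt_irrefl, dif_neg, not_false_eq_true, mul_zero]
      have : 2 * (d i * X i i) = 0 := by linear_combination e
      simpa [h2, hi, eq_comm] using this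
    · simp only [h, h.not_gt, dif_pos, dif_neg, not_false_eq_true]
      field_simp
      linear_combination -e

lemma trace_skew {F : Type*} [Field F] (h2 : (2 : F) ≠ 0) {N : ℕ} (d : Fin N → F)
    (a : (i : Fin N) × {j // i < j} → F) :
    (skewOf d a * skewOf d a).trace / 2 =
      ∑ p, (-1 * (d p.1)⁻¹ * (d p.2.1)⁻¹) * a p ^ 2 := by
  have h1 : (skewOf d a * skewOf d a).trace = ∑ i, ∑ j, skewOf d a i j * skewOf d a j i := by
    simp [Matrix.trace, Matrix.mul_apply]
  rw [h1, pairs_sum N _ (fun i j => mul_comm _ _) (fun i => by simp [skewOf]),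
    mul_div_cancel_left₀ _ h2, Fintype.sum_sigma]
  refine Finset.sum_congr rfl fun i _ => ?_
  rw [Finset.sum_subtype (Ioi i) (p := fun j => i < j) (by simp)]
  refine Finset.sum_congr rfl fun j _ => ?_
  have := j.2
  simp only [skewOf, this, this.not_gt, dif_pos, dif_neg, not_false_eq_true]
  ring

lemma sum_so_diag {F : Type*} [Field F] [Fintype F] [DecidableEq F] 
    (hF : ringChar F ≠ 2) {N : ℕ} (d : Fin N → F)
    (hd : ∀ i, d i ≠ 0) (ψ : AddChar F ℂ) (hψ : ψ ≠ 1) :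
    ∑ X : {X : Matrix (Fin N) (Fin N) F // Xᵀ * diagonal d + diagonal d * X = 0},
          ψ ((X.1 * X.1).trace / 2) =
      ((quadraticChar F (-1) : ℂ) * ∑ x : F, ψ (x ^ 2)) ^ (N.choose 2) *
        (quadraticChar F (∏ i, d i) : ℂ) ^ (N - 1) := by
  have h2 : (2 : F) ≠ 0 := Ring.two_ne_zero hF
  rw [← (soDiagEquiv h2 d hd).sum_comp]
  have h1 : ∀ a, ψ (((soDiagEquiv h2 d hd a).1 * (soDiagEquiv h2 d hd a).1).trace / 2) =
      ∏ p, ψ ((-1 * (d p.1)⁻¹ * (d p.2.1)⁻¹) * a p ^ 2) := by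
    intro a
    change ψ ((skewOf d a * skewOf d a).trace / 2) = _
    rw [trace_skew h2]
    exact map_prod ψ.toMonoidHom (fun p => Multiplicative.ofAdd
      ((-1 * (d p.1)⁻¹ * (d p.2.1)⁻¹) * a p ^ 2)) Finset.univ
  have hinv : ∀ x : F, quadraticChar F x⁻¹ = quadraticChar F x := by
    intro x
    rcases eq_or_ne x 0 with rfl | hx
    · simp
    have h3 := quadraticChar_sq_one hx
    have h4 : quadraticChar F x * quadraticChar F x⁻¹ = 1 := by
      rw [← map_mul, mul_inv_cancel₀ hx, map_one]
    linear_combination quadraticChar F x * h4 - quadraticChar F x⁻¹ * h3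
  simp only [h1]
  rw [← Fintype.prod_sum (fun (p : (i : Fin N) × {j // i < j}) (x : F) =>
    ψ ((-1 * (d p.1)⁻¹ * (d p.2.1)⁻¹) * x ^ 2))]
  rw [map_prod, Int.cast_prod, ← pairs_prod, Fintype.prod_sigma]
  refine Finset.prod_congr rfl fun i _ => ?_
  rw [Finset.prod_subtype (Ioi i) (p := fun j => i < j) (by simp)]
  refine Finset.prod_congr rfl fun j _ => ?_
  rw [gauss_shift hF ψ hψ _ (by simp [hd])]
  simp only [map_mul, hinv]
  push_cast
  ring

lemma sum_so_congr {F : Type*} [Field F] [Fintype F] [DecidableEq F] {N : ℕ}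
    (J D P : Matrix (Fin N) (Fin N) F) (hP : IsUnit P) (h : Pᵀ * J * P = D) (f : F → ℂ) :
    ∑ X : {X : Matrix (Fin N) (Fin N) F // Xᵀ * J + J * X = 0}, f (X.1 * X.1).trace =
    ∑ X : {X : Matrix (Fin N) (Fin N) F // Xᵀ * D + D * X = 0}, f (X.1 * X.1).trace := by
  have hdet : IsUnit P.det := (Matrix.isUnit_iff_isUnit_det P).1 hP
  have e1 := Matrix.mul_nonsing_inv P hdet
  have e2 := Matrix.nonsing_inv_mul P hdet
  have hdt : IsUnit Pᵀ.det := by rwa [Matrix.det_transpose]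
  have t1 := Matrix.mul_nonsing_inv Pᵀ hdt
  have t2 := Matrix.nonsing_inv_mul Pᵀ hdt
  have key : ∀ X : Matrix (Fin N) (Fin N) F,
      (P⁻¹ * X * P)ᵀ * D + D * (P⁻¹ * X * P) = Pᵀ * (Xᵀ * J + J * X) * P := by
    intro X
    rw [← h, Matrix.transpose_mul, Matrix.transpose_mul, Matrix.transpose_nonsing_inv]
    have a1 : Pᵀ * (Xᵀ * Pᵀ⁻¹) * (Pᵀ * J * P) = Pᵀ * Xᵀ * (Pᵀ⁻¹ * Pᵀ) * J * P := by
      simp only [Matrix.mul_assoc]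
    have a2 : Pᵀ * J * P * (P⁻¹ * X * P) = Pᵀ * J * (P * P⁻¹) * X * P := by
      simp only [Matrix.mul_assoc]
    rw [a1, a2, e1, t2]
    simp only [Matrix.mul_assoc, Matrix.mul_one, Matrix.one_mul, Matrix.mul_add, Matrix.add_mul]
  have conj1 : ∀ X, P⁻¹ * (P * X * P⁻¹) * P = X := by
    intro X
    have : P⁻¹ * (P * X * P⁻¹) * P = (P⁻¹ * P) * X * (P⁻¹ * P) := by simp only [Matrix.mul_assoc]
    rw [this, e2, Matrix.one_mul, Matrix.mul_one]
  have conj2 : ∀ X, P * (P⁻¹ * X * P) * P⁻¹ = X := by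
    intro X
    have : P * (P⁻¹ * X * P) * P⁻¹ = (P * P⁻¹) * X * (P * P⁻¹) := by simp only [Matrix.mul_assoc]
    rw [this, e1, Matrix.one_mul, Matrix.mul_one]
  let E : {X : Matrix (Fin N) (Fin N) F // Xᵀ * J + J * X = 0} ≃
      {X : Matrix (Fin N) (Fin N) F // Xᵀ * D + D * X = 0} :=
    { toFun := fun X => ⟨P⁻¹ * X.1 * P, by rw [key, X.2]; simp⟩
      invFun := fun X => ⟨P * X.1 * P⁻¹, by
        have h3 := key (P * X.1 * P⁻¹)
        rw [conj1, X.2] at h3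
        set Y := (P * X.1 * P⁻¹)ᵀ * J + J * (P * X.1 * P⁻¹)
        have : Y = Pᵀ⁻¹ * (Pᵀ * Y * P) * P⁻¹ := by
          have : Pᵀ⁻¹ * (Pᵀ * Y * P) * P⁻¹ = (Pᵀ⁻¹ * Pᵀ) * Y * (P * P⁻¹) := by
            simp only [Matrix.mul_assoc]
          rw [this, t2, e1, Matrix.one_mul, Matrix.mul_one]
        rw [this, ← h3]; simp⟩
      left_inv := fun X => Subtype.ext (conj2 _)
      right_inv := fun X => Subtype.ext (conj1 _) }
  refine Fintype.sum_equiv E _ _ fun X => ?_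
  congr 1
  change _ = ((P⁻¹ * X.1 * P) * (P⁻¹ * X.1 * P)).trace
  have : (P⁻¹ * X.1 * P) * (P⁻¹ * X.1 * P) = P⁻¹ * (X.1 * (P * P⁻¹) * X.1 * P) := by
    simp only [Matrix.mul_assoc]
  rw [this, e1, Matrix.mul_one, Matrix.trace_mul_comm P⁻¹, Matrix.mul_assoc, e1, Matrix.mul_one]

/-- The Weil index of the non-split quasi-split even orthogonal Lie algebra with the trace
pairing equals `-ε(ψ)^n`: if `J ∈ M_{2n}(F)` is symmetric invertible with
`χ((-1)^n det J) = -1`, then `q^{-n(2n-1)/2} ∑_{X ∈ so_J(2n,F)} ψ(tr(X²)/2) = -ε(ψ)^n`. -/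
theorem weilIndex_so_nonsplit {F : Type*} [Field F] [Fintype F] [DecidableEq F]
    (hq : Odd (Fintype.card F))
    (n : ℕ) (hn : 1 ≤ n)
    (J : Matrix (Fin (2 * n)) (Fin (2 * n)) F)
    (hJsymm : J.IsSymm) (hJinv : IsUnit J)
    (hJ : quadraticChar F ((-1) ^ n * J.det) = -1)
    (ψ : AddChar F ℂ) (hψ : ψ ≠ 1) :
    ((Real.sqrt (Fintype.card F) : ℂ))⁻¹ ^ (n * (2 * n - 1)) *
        ∑ X : {X : Matrix (Fin (2 * n)) (Fin (2 * n)) F // Xᵀ * J + J * X = 0},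
          ψ ((X.1 * X.1).trace / 2) =
      -(((Real.sqrt (Fintype.card F) : ℂ))⁻¹ * ∑ x : F, ψ (x ^ 2)) ^ n := by
  have hF : ringChar F ≠ 2 := by
    intro h
    have := FiniteField.even_card_of_char_two h
    have := Nat.odd_iff.1 hq
    omega
  have h2 : (2 : F) ≠ 0 := Ring.two_ne_zero hF
  obtain ⟨P, d, hP, hPJ⟩ := diagonalize h2 _ J hJsymm
  have hPd : P.det ≠ 0 := ((Matrix.isUnit_iff_isUnit_det P).1 hP).ne_zero
  have hJd : J.det ≠ 0 := ((Matrix.isUnit_iff_isUnit_det J).1 hJinv).ne_zero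
  have hdet : ∏ i, d i = P.det ^ 2 * J.det := by
    rw [← Matrix.det_diagonal, ← hPJ, Matrix.det_mul, Matrix.det_mul, Matrix.det_transpose]; ring
  have hd : ∀ i, d i ≠ 0 := by
    have : ∏ i, d i ≠ 0 := by rw [hdet]; exact mul_ne_zero (pow_ne_zero _ hPd) hJd
    intro i
    exact Finset.prod_ne_zero_iff.1 this i (Finset.mem_univ i)
  have hch : (2 * n).choose 2 = n * (2 * n - 1) := by
    rw [Nat.choose_two_right, mul_assoc, Nat.mul_div_cancel_left _ two_pos]
  rw [sum_so_congr J (diagonal d) P hP hPJ (fun t => ψ (t / 2)), sum_so_diag hF d hd ψ hψ, hch, hdet,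
    map_mul, quadraticChar_sq_one' hPd, one_mul]
  obtain ⟨m, rfl⟩ : ∃ m, n = m + 1 := ⟨n - 1, by omega⟩
  have hG := gauss_sq hF ψ hψ
  set G := ∑ x : F, ψ (x ^ 2)
  have hc : ((quadraticChar F (-1) : ℤ) : ℂ) ^ 2 = 1 := by
    exact_mod_cast quadraticChar_sq_one (F := F) (neg_ne_zero.2 one_ne_zero)
  have hdJ : ((quadraticChar F J.det : ℤ) : ℂ) ^ 2 = 1 := by
    exact_mod_cast quadraticChar_sq_one hJd
  have hJ' : ((quadraticChar F (-1) : ℤ) : ℂ) ^ (m + 1) * ((quadraticChar F J.det : ℤ) : ℂ) = -1 := by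
    rw [map_mul, map_pow] at hJ
    exact_mod_cast hJ
  set c := ((quadraticChar F (-1) : ℤ) : ℂ)
  set δ := ((quadraticChar F J.det : ℤ) : ℂ)
  have hs : ((Real.sqrt (Fintype.card F) : ℂ)) ^ 2 = Fintype.card F := by
    rw [← Complex.ofReal_pow, Real.sq_sqrt (by positivity)]; simp
  have hs0 : (Real.sqrt (Fintype.card F) : ℂ) ≠ 0 := by
    intro h0
    rw [h0] at hs
    have : (Fintype.card F : ℂ) ≠ 0 := by exact_mod_cast Fintype.card_ne_zero
    apply this; rw [← hs]; simp
  set s := (Real.sqrt (Fintype.card F) : ℂ)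
  have hε : (s⁻¹ * G) ^ 2 = c := by
    rw [mul_pow, hG, ← hs]; field_simp
  obtain ⟨k, hk⟩ : ∃ k, m * (m + 1) = 2 * k := (Nat.even_mul_succ_self m).two_dvd
  have hN : (m + 1) * (2 * (m + 1) - 1) = (m + 1) + 2 * (2 * k) := by
    rw [← hk, show 2 * (m + 1) - 1 = 2 * m + 1 by omega]; ring
  have hN' : 2 * (m + 1) - 1 = 2 * m + 1 := by omega
  calc s⁻¹ ^ ((m + 1) * (2 * (m + 1) - 1)) *
        ((c * G) ^ ((m + 1) * (2 * (m + 1) - 1)) * δ ^ (2 * (m + 1) - 1))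
      = (c * (s⁻¹ * G)) ^ ((m + 1) * (2 * (m + 1) - 1)) * δ ^ (2 * (m + 1) - 1) := by
        simp only [mul_pow]; ring
    _ = (c ^ 2) ^ (2 * k) * (((s⁻¹ * G) ^ 2) ^ 2) ^ k * (δ ^ 2) ^ m * (c ^ (m + 1) * δ)
          * (s⁻¹ * G) ^ (m + 1) := by
        rw [hN, hN']; generalize s⁻¹ * G = e; ring
    _ = _ := by rw [hε, hc, hdJ, hJ']; simp
end

section
/- Let F be a finite field of cardinality q and characteristic p > 3, and ψ : F → ℂ a nontrivial additive character. Then q^{-1} ∑_{x,y ∈ F} ψ(x² − 3xy + 3y²) = χ₃(q), where χ₃ is the quadratic character of ZMod 3 evaluated at q mod 3 (the Legendre symbol (q/3)). (This is the Weil index γ(G₂) = (q/3) computed from the symmetrized Cartan matrix [[2,−3],[−3,6]] of type G₂.) -/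
open Finset

lemma quad_sum {F : Type*} [Field F] [Fintype F] [DecidableEq F] (hF : ringChar F ≠ 2)
    (ψ : AddChar F ℂ) (hψ : ψ ≠ 1) (a : F) (ha : a ≠ 0) :
    ∑ x : F, ψ (a * x ^ 2) = ((quadraticChar F a : ℤ) : ℂ) *
      gaussSum ((quadraticChar F).ringHomComp (Int.castRingHom ℂ)) ψ := by
  have h0 : ∑ t : F, ψ (a * t) = 0 := by
    rw [← AddChar.sum_eq_zero_of_ne_one hψ]
    exact Fintype.sum_equiv (Equiv.mulLeft₀ a ha) _ _ (fun _ => rfl)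
  have h1 : ∑ x : F, ψ (a * x ^ 2) = ∑ t : F, ((quadraticChar F t : ℤ) + 1 : ℂ) * ψ (a * t) := by
    rw [← Finset.sum_fiberwise (s := Finset.univ) (g := fun x : F => x ^ 2)]
    refine Finset.sum_congr rfl fun t _ => ?_
    have hc := quadraticChar_card_sqrts hF t
    have he : ({x : F | x ^ 2 = t} : Set F).toFinset = Finset.univ.filter (fun x : F => x ^ 2 = t) := by
      ext; simp
    rw [he] at hc
    have hc' : ((#(Finset.univ.filter (fun x : F => x ^ 2 = t)) : ℕ) : ℂ) =
      ((quadraticChar F t : ℤ) + 1 : ℂ) := by exact_mod_cast hc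
    rw [← hc', ← nsmul_eq_mul]
    rw [← Finset.sum_const]
    refine Finset.sum_congr rfl fun x hx => ?_
    rw [(Finset.mem_filter.mp hx).2]
  have h2 := gaussSum_mulShift ((quadraticChar F).ringHomComp (Int.castRingHom ℂ)) ψ (Units.mk0 a ha)
  have hs : ((quadraticChar F a : ℤ) : ℂ) * ((quadraticChar F a : ℤ) : ℂ) = 1 := by
    have := quadraticChar_sq_one ha
    rw [sq] at this
    exact_mod_cast this
  rw [h1, ← h2]
  simp only [add_mul, one_mul, Finset.sum_add_distrib, h0, add_zero]
  simp only [MulChar.ringHomComp_apply, Units.val_mk0, eq_intCast]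
  rw [← mul_assoc, hs, one_mul]
  simp [gaussSum, AddChar.mulShift_apply]

/-- The Weil index of type `G₂`: `q⁻¹ ∑_{x,y ∈ F} ψ(x² - 3xy + 3y²) = (q/3)`, the Legendre
symbol of `q` modulo `3`. -/
theorem weilIndex_G2 {F : Type*} [Field F] [Fintype F]
    (hp : 3 < ringChar F)
    (ψ : AddChar F ℂ) (hψ : ψ ≠ 1) :
    (Fintype.card F : ℂ)⁻¹ *
        ∑ x : F, ∑ y : F, ψ (x ^ 2 - 3 * x * y + 3 * y ^ 2) =
      ((quadraticChar (ZMod 3) (Fintype.card F : ZMod 3) : ℤ) : ℂ) := by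
  classical
  have hF : ringChar F ≠ 2 := by omega
  have h2 : (2 : F) ≠ 0 := Ring.two_ne_zero hF
  have h3 : (3 : F) ≠ 0 := by
    intro h
    have : ((3 : ℕ) : F) = 0 := by exact_mod_cast h
    have := Nat.le_of_dvd (by norm_num) ((ringChar.spec F 3).mp this)
    omega
  have hS : ∑ x : F, ∑ y : F, ψ (x ^ 2 - 3 * x * y + 3 * y ^ 2) =
      (∑ x : F, ψ (1 * x ^ 2)) * ∑ y : F, ψ (3 * y ^ 2) := by
    rw [Finset.sum_comm, Finset.sum_mul_sum, Finset.sum_comm (s := (univ : Finset F))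
      (f := fun i j => ψ (1 * i ^ 2) * ψ (3 * j ^ 2))]
    symm
    refine Fintype.sum_equiv (Equiv.mulLeft₀ 2 h2) _ _ fun y => ?_
    refine Fintype.sum_equiv (Equiv.addRight (3 * y)) _ _ fun x => ?_
    rw [← AddChar.map_add_eq_mul]
    congr 1
    simp
    ring
  have hg := gaussSum_sq (χ := (quadraticChar F).ringHomComp (Int.castRingHom ℂ))
    ((MulChar.ringHomComp_ne_one_iff (RingHom.injective_int _)).mpr (quadraticChar_ne_one hF))
    ((quadraticChar_isQuadratic F).comp _) (AddChar.IsPrimitive.of_ne_one hψ)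
  have hq : (Fintype.card F : ℂ) ≠ 0 := by exact_mod_cast Fintype.card_ne_zero
  have hm := quadraticChar_neg_one hF
  have ho := quadraticChar_odd_prime hF (p := 3) (by norm_num) (by omega)
  have hz := quadraticChar_dichotomy (F := F) (a := -1) (neg_ne_zero.mpr one_ne_zero)
  have key : quadraticChar F 3 * quadraticChar F (-1) =
      quadraticChar (ZMod 3) (Fintype.card F : ZMod 3) := by
    push_cast at ho
    rw [ho, map_mul]
    rw [hm] at hz ⊢
    have hn : quadraticChar (ZMod 3) (-1) = -1 := by decide
    rcases hz with hz | hz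
    · simp only [hz, Int.cast_one, map_one, one_mul, mul_one]
    · simp only [hz, Int.cast_neg, Int.cast_one, hn]
      ring
  rw [hS, quad_sum hF ψ hψ 1 one_ne_zero, quad_sum hF ψ hψ 3 h3, ← key]
  simp only [map_one, Int.cast_one, one_mul]
  rw [mul_left_comm (gaussSum _ _), ← sq, hg]
  simp only [MulChar.ringHomComp_apply, eq_intCast]
  push_cast
  field_simp
end

section
/- Let F be a finite field of odd cardinality q and ψ : F → ℂ a nontrivial additive character. Then q^{-2} ∑_{(x₁,x₂,x₃,x₄) ∈ F⁴} ψ(x₁² − x₁x₂ + x₂² − 2x₂x₃ + 2x₃² − 2x₃x₄ + 2x₄²) = 1. (This is the Weil index γ(F₄) = 1 computed from the symmetrized Cartan matrix [[2,−1,0,0],[−1,2,−2,0],[0,−2,4,−2],[0,0,−2,4]] of type F₄.) -/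
open Finset

lemma gauss_two_sq {F : Type*} [Field F] [Fintype F] (ψ : AddChar F ℂ) (c d : F)
    (h : c ^ 2 + d ^ 2 = -1) :
    (∑ y : F, ψ (y ^ 2)) ^ 2 = (∑ y : F, ψ (-y ^ 2)) ^ 2 := by
  rw [sq, sq, Finset.sum_mul_sum, Finset.sum_mul_sum, ← Fintype.sum_prod_type',
    ← Fintype.sum_prod_type']
  let e : F × F ≃ F × F :=
    { toFun := fun p => (c * p.1 + d * p.2, d * p.1 - c * p.2)
      invFun := fun p => (-(c * p.1 + d * p.2), -(d * p.1 - c * p.2))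
      left_inv := fun p => by
        ext
        · simp only; linear_combination (-p.1) * h
        · simp only; linear_combination (-p.2) * h
      right_inv := fun p => by
        ext
        · simp only; linear_combination (-p.1) * h
        · simp only; linear_combination (-p.2) * h }
  rw [← e.sum_comp]
  refine Finset.sum_congr rfl fun p _ => ?_
  rw [← AddChar.map_add_eq_mul, ← AddChar.map_add_eq_mul]
  congr 1
  change (c * p.1 + d * p.2) ^ 2 + (d * p.1 - c * p.2) ^ 2 = _
  linear_combination (p.1 ^ 2 + p.2 ^ 2) * h

lemma gauss_mul_neg {F : Type*} [Field F] [Fintype F] (h2 : (2 : F) ≠ 0)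
    (ψ : AddChar F ℂ) (hψ : ψ ≠ 1) :
    (∑ y : F, ψ (y ^ 2)) * (∑ y : F, ψ (-y ^ 2)) = Fintype.card F := by
  classical
  rw [Finset.sum_mul_sum, Finset.sum_comm]
  have h1 : ∀ u : F, ∑ y : F, ψ (y ^ 2) * ψ (-u ^ 2) =
      ∑ t : F, ψ (t ^ 2) * ψ (u * (2 * t)) := by
    intro u
    rw [← Equiv.sum_comp (Equiv.addRight u)]
    refine Finset.sum_congr rfl fun t _ => ?_
    rw [← AddChar.map_add_eq_mul, ← AddChar.map_add_eq_mul]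
    congr 1
    simp only [Equiv.coe_addRight]
    ring
  simp_rw [h1]
  rw [Finset.sum_comm]
  simp_rw [← Finset.mul_sum, AddChar.sum_mulShift _ (AddChar.IsPrimitive.of_ne_one hψ)]
  simp [h2]

/-- The Weil index of type `F₄`:
`q⁻² ∑_{x ∈ F⁴} ψ(x₁² - x₁x₂ + x₂² - 2x₂x₃ + 2x₃² - 2x₃x₄ + 2x₄²) = 1`. -/
theorem weilIndex_F4 {F : Type*} [Field F] [Fintype F]
    (hq : Odd (Fintype.card F))
    (ψ : AddChar F ℂ) (hψ : ψ ≠ 1) :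
    ((Fintype.card F : ℂ) ^ 2)⁻¹ *
        ∑ x : Fin 4 → F,
          ψ (x 0 ^ 2 - x 0 * x 1 + x 1 ^ 2 - 2 * x 1 * x 2 + 2 * x 2 ^ 2
              - 2 * x 2 * x 3 + 2 * x 3 ^ 2) = 1 := by
  have hchar : ringChar F ≠ 2 := fun h => by
    have := FiniteField.even_card_of_char_two h
    rw [Nat.odd_iff] at hq
    omega
  have h2 : (2 : F) ≠ 0 := Ring.two_ne_zero hchar
  obtain ⟨c, d, hcd⟩ : ∃ c d : F, c ^ 2 + d ^ 2 = -1 := by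
    obtain ⟨a, b, hab⟩ := FiniteField.exists_root_sum_quadratic
      (f := (Polynomial.X ^ 2 : Polynomial F)) (g := Polynomial.X ^ 2 + Polynomial.C 1)
      (Polynomial.degree_X_pow 2)
      (Polynomial.degree_X_pow_add_C (by norm_num) 1) (Nat.odd_iff.mp hq)
    refine ⟨a, b, ?_⟩
    simp at hab
    linear_combination hab
  let e : (Fin 4 → F) ≃ (Fin 4 → F) :=
    { toFun := fun x => ![x 0 / 2, -(x 0 / 2) + x 3, -(x 0 / 2) + x 2 - x 3,
        -(x 0 / 2) + x 1 - x 2]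
      invFun := fun y => ![2 * y 0, y 3 + y 2 + y 1 + 3 * y 0, y 2 + y 1 + 2 * y 0, y 1 + y 0]
      left_inv := fun x => by
        ext i
        fin_cases i <;> simp <;> field_simp <;> ring
      right_inv := fun x => by
        ext i
        fin_cases i <;> simp <;> field_simp <;> ring }
  have key : ∑ x : Fin 4 → F,
          ψ (x 0 ^ 2 - x 0 * x 1 + x 1 ^ 2 - 2 * x 1 * x 2 + 2 * x 2 ^ 2
              - 2 * x 2 * x 3 + 2 * x 3 ^ 2) = (∑ y : F, ψ (y ^ 2)) ^ 4 := by
    rw [Fintype.sum_pow, ← Equiv.sum_comp e (fun p => ∏ i, ψ (p i ^ 2))]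
    refine Finset.sum_congr rfl fun x _ => ?_
    simp only [Fin.prod_univ_four, ← AddChar.map_add_eq_mul]
    congr 1
    simp [e]
    field_simp
    ring
  have h4 : (∑ y : F, ψ (y ^ 2)) ^ 4 = (Fintype.card F : ℂ) ^ 2 := by
    rw [← gauss_mul_neg h2 ψ hψ, mul_pow, ← gauss_two_sq ψ c d hcd]
    ring
  rw [key, h4]
  exact inv_mul_cancel₀ (pow_ne_zero 2 (Nat.cast_ne_zero.mpr Fintype.card_ne_zero))
end

section
/- Let F be a finite field of cardinality q and characteristic p > 3, and ψ : F → ℂ a nontrivial additive character. Let Q_{E₆}(x) = ∑_{i=1}^{6} x_i² − (x₁x₃ + x₃x₄ + x₄x₅ + x₅x₆ + x₂x₄) (half the quadratic form of the Cartan matrix of type E₆ in Bourbaki numbering). Then q^{-3} ∑_{x ∈ F⁶} ψ(Q_{E₆}(x)) = χ₃(q), where χ₃ is the quadratic character of ZMod 3 evaluated at q mod 3 (the Legendre symbol (q/3)). (This is the Weil index γ(E₆) = (q/3).) -/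
open Finset

/-- One-variable quadratic Gauss sums in terms of the multiplicative Gauss sum. -/
lemma sum_psi_mul_sq {F : Type*} [Field F] [Fintype F] [DecidableEq F]
    (h2 : ringChar F ≠ 2) (ψ : AddChar F ℂ) (hψ : ψ ≠ 1) (a : F) (ha : a ≠ 0) :
    ∑ x : F, ψ (a * x ^ 2) = ((quadraticChar F a : ℤ) : ℂ) *
      gaussSum ((quadraticChar F).ringHomComp (Int.castRingHom ℂ)) ψ := by
  have h1 : ∑ x : F, ψ (a * x ^ 2) =
      ∑ b : F, (((quadraticChar F b : ℤ) : ℂ) + 1) * ψ (a * b) := by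
    rw [← Finset.sum_fiberwise (s := univ) (g := fun x : F => x ^ 2)]
    refine Finset.sum_congr rfl fun b _ => ?_
    rw [Finset.sum_congr rfl (g := fun _ => ψ (a * b))]
    · rw [Finset.sum_const, nsmul_eq_mul]
      congr 1
      have := quadraticChar_card_sqrts h2 b
      have h3 : ({x : F | x ^ 2 = b}.toFinset) = Finset.filter (fun x : F => x ^ 2 = b) univ := by
        ext x; simp
      rw [h3] at this
      exact_mod_cast congrArg (fun z : ℤ => (z : ℂ)) this
    · intro x hx
      simp only [Finset.mem_filter] at hx
      rw [hx.2]
  have h0 : ∑ b : F, ψ (a * b) = 0 := by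
    have := AddChar.sum_eq_zero_of_ne_one hψ
    rw [← this]
    exact Fintype.sum_equiv (Equiv.mulLeft₀ a ha) _ _ (fun x => by simp)
  rw [h1]
  simp only [add_mul, one_mul, Finset.sum_add_distrib, h0, add_zero]
  have h4 := gaussSum_mulShift ((quadraticChar F).ringHomComp (Int.castRingHom ℂ)) ψ
    (Units.mk0 a ha)
  have h5 : ((quadraticChar F a : ℤ) : ℂ) * ((quadraticChar F a : ℤ) : ℂ) = 1 := by
    have := quadraticChar_sq_one ha
    rw [← sq]
    exact_mod_cast this
  rw [← h4]
  simp only [Units.val_mk0, MulChar.ringHomComp_apply, eq_intCast, ← mul_assoc, h5, one_mul]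
  simp [gaussSum, AddChar.mulShift_apply]

/-- The quadratic character mod `3` fixes signs. -/
lemma qchar_three_sign (z : ℤ) (hz : z ^ 2 = 1) : quadraticChar (ZMod 3) (z : ZMod 3) = z := by
  rcases sq_eq_one_iff.1 hz with rfl | rfl <;> decide

/-- The change of variables diagonalising `Q_{E₆}` as `⟨1,1,1,3,3,3⟩`. -/
def diagEquiv {F : Type*} [Field F] (h2 : (2 : F) ≠ 0) (h3 : (3 : F) ≠ 0) :
    (F × F × F × F × F × F) ≃ (Fin 6 → F) where
  toFun y := ![y.1 + y.2.2.2.1 + 2 * y.2.2.2.2.2, y.2.1 + 3 * y.2.2.2.2.2,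
    2 * y.2.2.2.1 + 4 * y.2.2.2.2.2, 6 * y.2.2.2.2.2,
    2 * y.2.2.2.2.1 + 4 * y.2.2.2.2.2, y.2.2.1 + y.2.2.2.2.1 + 2 * y.2.2.2.2.2]
  invFun x := (x 0 - x 2 / 2, x 1 - x 3 / 2, x 5 - x 4 / 2,
    x 2 / 2 - x 3 / 3, x 4 / 2 - x 3 / 3, x 3 / (2 * 3))
  left_inv := by
    rintro ⟨a, b, c, d, e, f⟩
    simp
    refine ⟨?_, ?_, ?_, ?_, ?_, ?_⟩ <;> field_simp <;> ring
  right_inv := by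
    intro x
    ext i
    fin_cases i <;> simp <;> field_simp <;> ring

theorem weilIndex_E6 {F : Type*} [Field F] [Fintype F]
    (hp : 3 < ringChar F)
    (ψ : AddChar F ℂ) (hψ : ψ ≠ 1) :
    ((Fintype.card F : ℂ) ^ 3)⁻¹ *
        ∑ x : Fin 6 → F,
          ψ ((∑ i, x i ^ 2) -
              (x 0 * x 2 + x 2 * x 3 + x 3 * x 4 + x 4 * x 5 + x 1 * x 3)) =
      ((quadraticChar (ZMod 3) (Fintype.card F : ZMod 3) : ℤ) : ℂ) := by
  classical
  have hr2 : ringChar F ≠ 2 := by omega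
  have hr3 : ringChar F ≠ 3 := by omega
  have h2 : (2 : F) ≠ 0 := Ring.two_ne_zero hr2
  have h3 : (3 : F) ≠ 0 := by
    intro h
    have h' : ((3 : ℕ) : F) = 0 := by exact_mod_cast h
    have := Nat.le_of_dvd (by norm_num) ((ringChar.spec F 3).1 h')
    omega
  set χ := (quadraticChar F).ringHomComp (Int.castRingHom ℂ) with hχ
  set g := gaussSum χ ψ with hg
  have hS : ∑ x : Fin 6 → F, ψ ((∑ i, x i ^ 2) -
      (x 0 * x 2 + x 2 * x 3 + x 3 * x 4 + x 4 * x 5 + x 1 * x 3)) =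
      (∑ x : F, ψ (1 * x ^ 2)) ^ 3 * (∑ x : F, ψ (3 * x ^ 2)) ^ 3 := by
    rw [← (diagEquiv h2 h3).sum_comp]
    have key : ∀ y : F × F × F × F × F × F,
        ψ ((∑ i, (diagEquiv h2 h3 y) i ^ 2) -
          ((diagEquiv h2 h3 y) 0 * (diagEquiv h2 h3 y) 2 +
          (diagEquiv h2 h3 y) 2 * (diagEquiv h2 h3 y) 3 +
          (diagEquiv h2 h3 y) 3 * (diagEquiv h2 h3 y) 4 +
          (diagEquiv h2 h3 y) 4 * (diagEquiv h2 h3 y) 5 +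
          (diagEquiv h2 h3 y) 1 * (diagEquiv h2 h3 y) 3)) =
        ψ (1 * y.1 ^ 2) * (ψ (1 * y.2.1 ^ 2) * (ψ (1 * y.2.2.1 ^ 2) *
          (ψ (3 * y.2.2.2.1 ^ 2) * (ψ (3 * y.2.2.2.2.1 ^ 2) *
            ψ (3 * y.2.2.2.2.2 ^ 2))))) := by
      rintro ⟨a, b, c, d, e, f⟩
      simp only [← AddChar.map_add_eq_mul]
      congr 1
      simp [diagEquiv, Fin.sum_univ_succ]
      ring
    simp only [key, Fintype.sum_prod_type, ← Finset.mul_sum, ← Finset.sum_mul]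
    ring
  have hχ1 : χ ≠ 1 := by
    rw [hχ]
    exact (MulChar.ringHomComp_ne_one_iff (RingHom.injective_int _)).2
      (quadraticChar_ne_one hr2)
  have hgsq : g ^ 2 = χ (-1) * Fintype.card F :=
    gaussSum_sq hχ1 ((quadraticChar_isQuadratic F).comp _) (AddChar.IsPrimitive.of_ne_one hψ)
  have hq : (Fintype.card F : ℂ) ≠ 0 := by exact_mod_cast Fintype.card_ne_zero
  have hm1 : χ (-1) = ((quadraticChar F (-1) : ℤ) : ℂ) := rfl
  have e1 : (quadraticChar F (-1)) ^ 3 = quadraticChar F (-1) := by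
    rw [pow_succ, quadraticChar_sq_one (neg_ne_zero.2 one_ne_zero), one_mul]
  have e3 : (quadraticChar F 3) ^ 3 = quadraticChar F 3 := by
    rw [pow_succ, quadraticChar_sq_one h3, one_mul]
  have hrec : quadraticChar F 3 * quadraticChar F (-1) =
      quadraticChar (ZMod 3) (Fintype.card F : ZMod 3) := by
    have h := quadraticChar_odd_prime hr2 (p := 3) (by norm_num) hr3
    have hn := quadraticChar_neg_one hr2
    have hsq := quadraticChar_sq_one (F := F) (neg_ne_zero.2 one_ne_zero)
    push_cast at h
    rw [h, map_mul, hn]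
    rw [hn] at hsq
    rw [qchar_three_sign _ hsq, mul_right_comm, ← sq, hsq, one_mul]
  rw [hS, sum_psi_mul_sq hr2 ψ hψ 1 one_ne_zero, sum_psi_mul_sq hr2 ψ hψ 3 h3, ← hrec]
  have : ((quadraticChar F 1 : ℤ) : ℂ) = 1 := by simp
  rw [this, ← hχ, ← hg]
  have e1' := congrArg (fun z : ℤ => (z : ℂ)) e1
  have e3' := congrArg (fun z : ℤ => (z : ℂ)) e3
  push_cast at e1' e3' ⊢
  calc _ = ((Fintype.card F : ℂ) ^ 3)⁻¹ * (((quadraticChar F 3 : ℤ) : ℂ) ^ 3 * (g ^ 2) ^ 3) := by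
        ring
    _ = _ := by
        rw [hgsq, mul_pow, hm1, e1', e3']
        field_simp
end

section
/- Let F be a finite field of odd cardinality q and ψ : F → ℂ a nontrivial additive character. Let Q_{E₇}(x) = ∑_{i=1}^{7} x_i² − (x₁x₃ + x₃x₄ + x₄x₅ + x₅x₆ + x₆x₇ + x₂x₄) (half the quadratic form of the Cartan matrix of type E₇ in Bourbaki numbering). Then (∑_{x ∈ F⁷} ψ(Q_{E₇}(x))) · (∑_{t ∈ F} ψ(t²)) = q⁴. (Equivalently, the Weil index γ(E₇) equals ε(ψ)^{−1}, where ε(ψ) = q^{-1/2} ∑_{t ∈ F} ψ(t²).) -/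
open Finset

/-- Change of variables given by seven mutually orthogonal roots of `E₇`. -/
def e7Equiv {F : Type*} [Field F] (h2 : (2 : F) ≠ 0) : (Fin 7 → F) ≃ (Fin 7 → F) where
  toFun y := ![2 * y 6,
      1 * y 3 + 1 * y 4 + 1 * y 5 + 2 * y 6,
      1 * y 2 + 1 * y 4 + 1 * y 5 + 3 * y 6,
      2 * y 4 + 2 * y 5 + 4 * y 6,
      1 * y 1 + 1 * y 4 + 2 * y 5 + 3 * y 6,
      2 * y 5 + 2 * y 6,
      1 * y 0 + 1 * y 5 + 1 * y 6]
  invFun x := ![((-1) * x 5 + 2 * x 6) / 2,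
      ((-1) * x 3 + 2 * x 4 + (-1) * x 5) / 2,
      ((-1) * x 0 + 2 * x 2 + (-1) * x 3) / 2,
      (2 * x 1 + (-1) * x 3) / 2,
      ((-1) * x 0 + 1 * x 3 + (-1) * x 5) / 2,
      ((-1) * x 0 + 1 * x 5) / 2,
      (1 * x 0) / 2]
  left_inv y := by
    funext i
    fin_cases i <;> simp <;> field_simp <;> ring
  right_inv x := by
    funext i
    fin_cases i <;> simp <;> field_simp <;> ring

lemma e7Equiv_form {F : Type*} [Field F] (h2 : (2 : F) ≠ 0) (y x : Fin 7 → F)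
    (hx : e7Equiv h2 y = x) :
    (∑ i, x i ^ 2) -
      (x 0 * x 2 + x 2 * x 3 + x 3 * x 4 + x 4 * x 5 + x 5 * x 6 + x 1 * x 3) =
    ∑ i, y i ^ 2 := by
  subst hx
  simp [e7Equiv, Fin.sum_univ_succ]
  ring

lemma sum_sq_eq_gaussSum {F : Type*} [Field F] [Fintype F] [DecidableEq F]
    (hF : ringChar F ≠ 2) (ψ : AddChar F ℂ) (hψ : ψ ≠ 1) :
    ∑ t : F, ψ (t ^ 2) =
      gaussSum ((quadraticChar F).ringHomComp (Int.castRingHom ℂ)) ψ := by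
  have h0 : ∑ a : F, ψ a = 0 := AddChar.sum_eq_zero_of_ne_one hψ
  have h1 : ∑ t : F, ψ (t ^ 2) = ∑ a : F, ((quadraticChar F a : ℂ) + 1) * ψ a := by
    rw [← Finset.sum_fiberwise (s := univ) (g := fun t : F => t ^ 2)]
    refine Finset.sum_congr rfl fun a _ => ?_
    have h := quadraticChar_card_sqrts hF a
    have h' : ((#{x : F | x ^ 2 = a} : ℕ) : ℤ) = quadraticChar F a + 1 := by
      rw [← h]; congr 2; ext; simp
    have h'' : ((#{x : F | x ^ 2 = a} : ℕ) : ℂ) = (quadraticChar F a : ℂ) + 1 := by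
      exact_mod_cast congrArg (Int.cast : ℤ → ℂ) h'
    rw [← h'', ← nsmul_eq_mul]
    apply Finset.sum_eq_card_nsmul
    intro b hb
    rw [(Finset.mem_filter.mp hb).2]
  rw [h1]
  simp [add_mul, Finset.sum_add_distrib, h0, gaussSum]

lemma sum_sq_pow_four {F : Type*} [Field F] [Fintype F]
    (hF : ringChar F ≠ 2) (ψ : AddChar F ℂ) (hψ : ψ ≠ 1) :
    (∑ t : F, ψ (t ^ 2)) ^ 4 = (Fintype.card F : ℂ) ^ 2 := by
  classical
  rw [sum_sq_eq_gaussSum hF ψ hψ]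
  have h := gaussSum_sq (χ := (quadraticChar F).ringHomComp (Int.castRingHom ℂ))
    ((MulChar.ringHomComp_ne_one_iff (RingHom.injective_int _)).mpr (quadraticChar_ne_one hF))
    ((quadraticChar_isQuadratic F).comp _) (AddChar.IsPrimitive.of_ne_one hψ)
  rw [show (4 : ℕ) = 2 * 2 from rfl, pow_mul, h, mul_pow, ← map_pow]
  simp

/-- The Weil index of type `E₇` equals `ε(ψ)⁻¹`:
`(∑_{x ∈ F⁷} ψ(Q_{E₇}(x))) · (∑_{t ∈ F} ψ(t²)) = q⁴`, where `Q_{E₇}` is half the quadratic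
form of the Cartan matrix of type `E₇` (Bourbaki numbering). -/
theorem weilIndex_E7 {F : Type*} [Field F] [Fintype F]
    (hq : Odd (Fintype.card F))
    (ψ : AddChar F ℂ) (hψ : ψ ≠ 1) :
    (∑ x : Fin 7 → F,
          ψ ((∑ i, x i ^ 2) -
              (x 0 * x 2 + x 2 * x 3 + x 3 * x 4 + x 4 * x 5 + x 5 * x 6 + x 1 * x 3))) *
        (∑ t : F, ψ (t ^ 2)) =
      (Fintype.card F : ℂ) ^ 4 := by
  have hF : ringChar F ≠ 2 := by
    intro h
    have := FiniteField.even_card_of_char_two h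
    rw [Nat.odd_iff] at hq
    omega
  have h2 : (2 : F) ≠ 0 := Ring.two_ne_zero hF
  have key := sum_sq_pow_four hF ψ hψ
  rw [← Equiv.sum_comp (e7Equiv h2)]
  have h7 : (∑ t : F, ψ (t ^ 2)) ^ 7 = ∑ y : Fin 7 → F, ψ (∑ i, y i ^ 2) := by
    rw [Fintype.sum_pow]
    refine Finset.sum_congr rfl fun y _ => ?_
    simp [Fin.sum_univ_succ, Fin.prod_univ_succ, AddChar.map_add_eq_mul]
  simp_rw [e7Equiv_form h2 _ _ rfl]
  rw [← h7]
  linear_combination ((∑ t : F, ψ (t ^ 2)) ^ 4 + (Fintype.card F : ℂ) ^ 2) * key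
end
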